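/- arXiv:1604.07038 — 9 statements merged into one kernel-verified Lean document; each statement's English description precedes it below -/
import Mathlib

section
/- For every w ∈ W, the subgraph of G induced by the vertex set cell(w) \ R is connected. -/
/-!
Let `w` be a center. A vertex `v` lies in `cell w \ R` exactly when `w` is the smallest of the
centers closest to `v` and `dist w v ≤ ℓ_k(v)`. If such a `v` is not `w` itself, let `u` be the
next vertex on a shortest path from `v` to `w`. Every distance from `u` differs from the
corresponding distance from `v` by at most one, while the distance to `w` drops by exactly one,
so `w` is still the closest center and still wins ties. Moreover `Γ_ℓ(u) ⊆ Γ_{ℓ+1}(v)` gives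
`ℓ_k(v) ≤ ℓ_k(u) + 1`, hence `dist w u = dist w v - 1 ≤ ℓ_k(u)` and `u` is not remote either.
By induction on the distance, every vertex of `cell w \ R` is joined to `w` inside the set.
-/

open Classical

noncomputable section

/-- `Γ_ℓ(v)`: the set of vertices at distance at most `ℓ` from `v`. -/
def Gamma {V : Type*} (G : SimpleGraph V) (v : V) (ℓ : ℕ) : Set V :=
  {u | G.dist u v ≤ ℓ}

/-- `ℓ_k(v)`: the minimum `ℓ` such that `|Γ_ℓ(v)| ≥ k`. -/
def ellk {V : Type*} (G : SimpleGraph V) (k : ℕ) (v : V) : ℕ :=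
  sInf {ℓ : ℕ | k ≤ (Gamma G v ℓ).ncard}

/-- `B_k(v) = Γ_{ℓ_k(v)}(v)`. -/
def Bk {V : Type*} (G : SimpleGraph V) (k : ℕ) (v : V) : Set V :=
  Gamma G v (ellk G k v)

/-- The set `R` of remote vertices: those `v` with `B_k(v) ∩ W = ∅`. -/
def remote {V : Type*} (G : SimpleGraph V) (k : ℕ) (W : Set V) : Set V :=
  {v | Bk G k v ∩ W = ∅}

/-- The centers of `W` closest to `v`. -/
def closestCenters {V : Type*} [Fintype V] [LinearOrder V] (G : SimpleGraph V)
    (W : Finset V) (v : V) : Finset V :=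
  W.filter fun w => ∀ w' ∈ W, G.dist w v ≤ G.dist w' v

lemma closestCenters_nonempty {V : Type*} [Fintype V] [LinearOrder V] (G : SimpleGraph V)
    {W : Finset V} (hW : W.Nonempty) (v : V) : (closestCenters G W v).Nonempty := by
  obtain ⟨w, hwW, hw⟩ := W.exists_min_image (fun w => G.dist w v) hW
  exact ⟨w, Finset.mem_filter.mpr ⟨hwW, hw⟩⟩

/-- `cent(v)`: the smallest vertex (by the linear order on identifiers) among the
vertices of `W` at minimum distance from `v`. -/
def cent {V : Type*} [Fintype V] [LinearOrder V] (G : SimpleGraph V)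
    (W : Finset V) (hW : W.Nonempty) (v : V) : V :=
  (closestCenters G W v).min' (closestCenters_nonempty G hW v)

/-- `cell(w) = {v : cent(v) = w}`. -/
def cell {V : Type*} [Fintype V] [LinearOrder V] (G : SimpleGraph V)
    (W : Finset V) (hW : W.Nonempty) (w : V) : Set V :=
  {v | cent G W hW v = w}

lemma cent_eq_iff {V : Type*} [Fintype V] [LinearOrder V] (G : SimpleGraph V)
    {W : Finset V} (hW : W.Nonempty) {w : V} (hw : w ∈ W) (v : V) :
    cent G W hW v = w ↔
      ∀ w' ∈ W, G.dist w v ≤ G.dist w' v ∧ (G.dist w' v = G.dist w v → w ≤ w') := by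
  rw [cent, Finset.min'_eq_iff]
  simp only [closestCenters, Finset.mem_filter]
  constructor
  · rintro ⟨⟨-, hmin⟩, hle⟩ w' hw'
    exact ⟨hmin w' hw', fun h => hle w' ⟨hw', fun x hx => h ▸ hmin x hx⟩⟩
  · intro h
    refine ⟨⟨hw, fun w' hw' => (h w' hw').1⟩, ?_⟩
    rintro w' ⟨hw', hmin⟩
    exact (h w' hw').2 (le_antisymm (hmin w hw) (h w' hw').1)

/-- Membership in `cell w \ R` in terms of distances: a vertex of the cell of `w` is non-remote
exactly when `w` itself lies in its ball, because no center is closer. -/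
lemma mem_cell_sdiff_remote_iff {V : Type*} [Fintype V] [LinearOrder V] (G : SimpleGraph V)
    (k : ℕ) {W : Finset V} (hW : W.Nonempty) {w : V} (hw : w ∈ W) (v : V) :
    v ∈ cell G W hW w \ remote G k (W : Set V) ↔
      (∀ w' ∈ W, G.dist w v ≤ G.dist w' v ∧ (G.dist w' v = G.dist w v → w ≤ w')) ∧
        G.dist w v ≤ ellk G k v := by
  rw [Set.mem_sdiff, cell, Set.mem_ofPred_eq, cent_eq_iff G hW hw]
  refine and_congr_right fun h => ?_
  rw [remote, Set.mem_ofPred_eq, ← ne_eq, ← Set.nonempty_iff_ne_empty]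
  constructor
  · rintro ⟨x, hx, hxW⟩
    exact (h x hxW).1.trans hx
  · exact fun hv => ⟨w, hv, hw⟩

lemma ellk_le_succ_of_adj {V : Type*} [Fintype V] {G : SimpleGraph V} (hconn : G.Connected)
    {k : ℕ} (hkn : k ≤ Fintype.card V) {u v : V} (huv : G.Adj u v) :
    ellk G k v ≤ ellk G k u + 1 := by
  -- Some radius works at `u`, so that the infimum defining `ℓ_k(u)` is attained.
  have hne : {ℓ : ℕ | k ≤ (Gamma G u ℓ).ncard}.Nonempty := by
    refine ⟨Finset.univ.sup fun x => G.dist x u, ?_⟩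
    have : Gamma G u (Finset.univ.sup fun x => G.dist x u) = Set.univ :=
      Set.eq_univ_of_forall fun x =>
        Finset.le_sup (f := fun x => G.dist x u) (Finset.mem_univ x)
    rw [Set.mem_ofPred_eq, this, Set.ncard_univ, Nat.card_eq_fintype_card]
    exact hkn
  have hu : k ≤ (Gamma G u (ellk G k u)).ncard := Nat.sInf_mem hne
  refine Nat.sInf_le (hu.trans (Set.ncard_le_ncard (fun x hx => ?_) (Set.toFinite _)))
  have hx : G.dist x u ≤ ellk G k u := hx
  have h1 : G.dist x v ≤ G.dist x u + G.dist u v := hconn.dist_triangle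
  rw [SimpleGraph.dist_eq_one_iff_adj.mpr huv] at h1
  exact h1.trans (Nat.add_le_add_right hx 1)

lemma exists_adj_dist_eq {V : Type*} {G : SimpleGraph V} (hconn : G.Connected) {w v : V}
    (hvw : v ≠ w) : ∃ u, G.Adj v u ∧ G.dist w v = G.dist w u + 1 := by
  obtain ⟨p, hp⟩ := hconn.exists_walk_length_eq_dist v w
  cases p with
  | nil => exact absurd rfl hvw
  | @cons _ u _ h q =>
    refine ⟨u, h, ?_⟩
    have h1 : G.dist u w ≤ q.length := SimpleGraph.dist_le q
    have h2 : G.dist v w ≤ G.dist v u + G.dist u w := hconn.dist_triangle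
    rw [SimpleGraph.dist_eq_one_iff_adj.mpr h] at h2
    rw [SimpleGraph.Walk.length_cons] at hp
    rw [G.dist_comm (u := w) (v := v), G.dist_comm (u := w) (v := u)]
    omega

/-- For every `w ∈ W`, the subgraph of `G` induced by `cell(w) \ R` is connected. -/
theorem cell_sdiff_remote_connected {V : Type*} [Fintype V] [LinearOrder V]
    (G : SimpleGraph V) (hconn : G.Connected)
    (d : ℕ) (hdeg : ∀ v : V, (G.neighborSet v).ncard ≤ d)
    (k : ℕ) (hk1 : 1 ≤ k) (hkn : k ≤ Fintype.card V)
    (W : Finset V) (hW : W.Nonempty) (w : V) (hw : w ∈ W) :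
    (G.induce (cell G W hW w \ remote G k (W : Set V))).Connected := by
  have hmem := mem_cell_sdiff_remote_iff G k hW hw
  have hwS : w ∈ cell G W hW w \ remote G k (W : Set V) := by
    rw [hmem, SimpleGraph.dist_self]
    refine ⟨fun w' _ => ⟨Nat.zero_le _, fun h => ?_⟩, Nat.zero_le _⟩
    exact (hconn.dist_eq_zero_iff.mp h).ge
  have key : ∀ n : ℕ, ∀ v, ∀ hv : v ∈ cell G W hW w \ remote G k (W : Set V), G.dist w v = n →
      (G.induce (cell G W hW w \ remote G k (W : Set V))).Reachable ⟨w, hwS⟩ ⟨v, hv⟩ := by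
    intro n
    induction n with
    | zero =>
      intro v hv h
      obtain rfl := hconn.dist_eq_zero_iff.mp h
      exact SimpleGraph.Reachable.refl _
    | succ n ih =>
      intro v hv hn
      have hvw : v ≠ w := by
        rintro rfl
        simp at hn
      obtain ⟨u, hadj, hu⟩ := exists_adj_dist_eq hconn hvw
      obtain ⟨hclose, hball⟩ := (hmem v).mp hv
      have huS : u ∈ cell G W hW w \ remote G k (W : Set V) := by
        refine (hmem u).mpr ⟨fun w' hw' => ?_, ?_⟩
        · have htri : G.dist w' v ≤ G.dist w' u + G.dist u v := hconn.dist_triangle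
          rw [SimpleGraph.dist_eq_one_iff_adj.mpr hadj.symm] at htri
          obtain ⟨hle, htie⟩ := hclose w' hw'
          -- A tie at `u` forces a tie at `v`, where `w` is the smallest closest center.
          exact ⟨by omega, fun h => htie (by omega)⟩
        · have := ellk_le_succ_of_adj hconn hkn hadj.symm
          omega
      have hstep : (G.induce (cell G W hW w \ remote G k (W : Set V))).Adj ⟨u, huS⟩ ⟨v, hv⟩ :=
        hadj.symm
      exact (ih u huS (by omega)).trans hstep.reachable
  exact (SimpleGraph.connected_iff_exists_forall_reachable _).mpr
    ⟨⟨w, hwS⟩, fun v => key _ v.1 v.2 rfl⟩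

end
end

section
/- For every w ∈ W, every v ∈ cell(w) \ R, and every vertex u lying on a shortest path in G between v and w (i.e. dist(v,u) + dist(u,w) = dist(v,w)), it holds that u ∈ cell(w) \ R. -/
/-!
Let `u` lie on a shortest path from `v` to its center `w`. Every vertex `w'` satisfies
`dist w' v ≤ dist w' u + dist u v`, with equality for `w`. Hence `w` is a closest center of `u`,
and every closest center of `u` is one of `v`; the minimality of `w` in the linear order
therefore carries over from `v` to `u`, so `cent u = w`.

For remoteness, the radius `ℓ_k` is 1-Lipschitz (`ellk_le_ellk_add_dist`), so
`dist w v ≤ ℓ_k(v)` gives `dist w u = dist w v - dist u v ≤ ℓ_k(u)`, i.e. `w ∈ B_k(u)`.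
-/

open Classical

noncomputable section

/-- The infimum defining `ℓ_k(v)` is attained: in a finite graph some ball is all of `V`, so
`ℓ_k(v)` is not the junk value of `sInf ∅`. -/
lemma le_ncard_Gamma_ellk {V : Type*} [Fintype V] (G : SimpleGraph V) {k : ℕ}
    (hkn : k ≤ Fintype.card V) (v : V) : k ≤ (Gamma G v (ellk G k v)).ncard := by
  have hne : {ℓ : ℕ | k ≤ (Gamma G v ℓ).ncard}.Nonempty := by
    refine ⟨Finset.univ.sup fun u => G.dist u v, ?_⟩
    have huniv : Gamma G v (Finset.univ.sup fun u => G.dist u v) = Set.univ :=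
      Set.eq_univ_of_forall fun u =>
        Finset.le_sup (f := fun u => G.dist u v) (Finset.mem_univ u)
    simpa [huniv, Set.ncard_univ, Nat.card_eq_fintype_card] using hkn
  exact Nat.sInf_mem hne

/-- `ℓ_k` is 1-Lipschitz: the ball of radius `ℓ_k(u) + dist u v` around `v` contains `B_k(u)`,
hence has at least `k` vertices. -/
lemma ellk_le_ellk_add_dist {V : Type*} [Fintype V] {G : SimpleGraph V} (hconn : G.Connected)
    {k : ℕ} (hkn : k ≤ Fintype.card V) (u v : V) :
    ellk G k v ≤ ellk G k u + G.dist u v := by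
  refine Nat.sInf_le ((le_ncard_Gamma_ellk G hkn u).trans (Set.ncard_le_ncard ?_))
  intro x hx
  exact hconn.dist_triangle.trans (Nat.add_le_add_right hx _)

lemma mem_closestCenters {V : Type*} [Fintype V] [LinearOrder V] {G : SimpleGraph V}
    {W : Finset V} {v w : V} :
    w ∈ closestCenters G W v ↔ w ∈ W ∧ ∀ w' ∈ W, G.dist w v ≤ G.dist w' v := by
  simp [closestCenters]

/-- For every `w ∈ W`, every `v ∈ cell(w) \ R`, and every vertex `u` lying on a shortest
path in `G` between `v` and `w`, it holds that `u ∈ cell(w) \ R`. -/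
theorem shortest_path_mem_cell_sdiff_remote {V : Type*} [Fintype V] [LinearOrder V]
    (G : SimpleGraph V) (hconn : G.Connected)
    (d : ℕ) (hdeg : ∀ v : V, (G.neighborSet v).ncard ≤ d)
    (k : ℕ) (hk1 : 1 ≤ k) (hkn : k ≤ Fintype.card V)
    (W : Finset V) (hW : W.Nonempty) (w : V) (hw : w ∈ W)
    (v : V) (hv : v ∈ cell G W hW w \ remote G k (W : Set V))
    (u : V) (hu : G.dist v u + G.dist u w = G.dist v w) :
    u ∈ cell G W hW w \ remote G k (W : Set V) := by
  obtain ⟨hcell, hrem⟩ := hv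
  have hcent : cent G W hW v = w := hcell
  have hwv : ∀ w' ∈ W, G.dist w v ≤ G.dist w' v := by
    have h := Finset.min'_mem _ (closestCenters_nonempty G hW v)
    change cent G W hW v ∈ _ at h
    rw [hcent] at h
    exact (mem_closestCenters.mp h).2
  have hsplit : G.dist w v = G.dist w u + G.dist u v := by
    rw [G.dist_comm (u := w) (v := v), ← hu, G.dist_comm (u := v), G.dist_comm (u := u) (v := w),
      add_comm]
  have htri : ∀ w', G.dist w' v ≤ G.dist w' u + G.dist u v := fun w' => hconn.dist_triangle
  refine ⟨?_, ?_⟩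
  · change cent G W hW u = w
    apply le_antisymm
    · refine Finset.min'_le _ _ (mem_closestCenters.mpr ⟨hw, fun w' hw' => ?_⟩)
      have := hwv w' hw'
      have := htri w'
      omega
    · refine Finset.le_min' _ _ _ fun w' hw' => ?_
      obtain ⟨hw'W, hmin⟩ := mem_closestCenters.mp hw'
      rw [← hcent]
      refine Finset.min'_le _ _ (mem_closestCenters.mpr ⟨hw'W, fun x hx => ?_⟩)
      have := hwv x hx
      have := htri w'
      have := hmin w hw
      omega
  · intro hu_rem
    obtain ⟨w', hw'B, hw'W⟩ := Set.nonempty_iff_ne_empty.mpr hrem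
    have hw'_le : G.dist w' v ≤ ellk G k v := hw'B
    have hwB : w ∈ Bk G k u := by
      change G.dist w u ≤ ellk G k u
      have := hwv w' hw'W
      have := ellk_le_ellk_add_dist hconn hkn u v
      omega
    exact Set.eq_empty_iff_forall_notMem.mp hu_rem w ⟨hwB, hw⟩

end
end

section
/- If cent(v) = w and u is a neighbor of v in G with dist(u,w) = dist(v,w) − 1, then cent(u) = w. -/
/-!
Moving from `v` to an adjacent `u` changes the distance to any center by at most one. As `u` is
one step closer than `v` to `w`, a center `x` with `dist x u ≤ dist w u` has
`dist x v ≤ dist w u + 1 = dist w v`. So `w` is still closest to `u`, and every center closest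
to `u` was already closest to `v`; hence `w`, the least of the latter, is the least of the former.
-/

open Classical

noncomputable section

/-- If `cent(v) = w` and `u` is a neighbor of `v` in `G` with
`dist(u,w) = dist(v,w) − 1`, then `cent(u) = w`. -/
theorem cent_of_neighbor_on_shortest_path {V : Type*} [Fintype V] [LinearOrder V]
    (G : SimpleGraph V) (hconn : G.Connected)
    (W : Finset V) (hW : W.Nonempty)
    (v u w : V) (hcent : cent G W hW v = w) (hadj : G.Adj u v)
    (hdist : G.dist u w + 1 = G.dist v w) :
    cent G W hW u = w := by
  have hwv : w ∈ closestCenters G W v := hcent ▸ Finset.min'_mem _ _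
  have hmin : ∀ x ∈ closestCenters G W v, w ≤ x := fun x hx => hcent ▸ Finset.min'_le _ x hx
  obtain ⟨hwW, hw⟩ := Finset.mem_filter.mp hwv
  have hstep : ∀ x, G.dist x v ≤ G.dist x u + 1 := fun x => by
    have h := hconn.dist_triangle (u := x) (v := u) (w := v)
    rwa [SimpleGraph.dist_eq_one_iff_adj.mpr hadj] at h
  rw [G.dist_comm (u := u), G.dist_comm (u := v)] at hdist
  have hwu : w ∈ closestCenters G W u := Finset.mem_filter.mpr ⟨hwW, fun x hx => by
    have h₁ := hw x hx
    have h₂ := hstep x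
    omega⟩
  have hsub : closestCenters G W u ⊆ closestCenters G W v := fun x hx => by
    obtain ⟨hxW, hx⟩ := Finset.mem_filter.mp hx
    refine Finset.mem_filter.mpr ⟨hxW, fun y hy => ?_⟩
    have h₁ := hx w hwW
    have h₂ := hstep x
    have h₃ := hw y hy
    omega
  exact le_antisymm (Finset.min'_le _ w hwu) (hmin _ (hsub (Finset.min'_mem _ _)))

end
end

section
/- If G has maximum degree at most d (with d ≥ 2) and k is an integer with 1 ≤ k ≤ n, then for every vertex v, |Y_k(v)| ≤ d^3 · k^{log₂(k) + 1} (where the exponent is a real number). -/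
/-!
A vertex `u` lies in `Y_k(v)` exactly when every ball about `u` of radius less than `dist(u,v)` has
fewer than `k` vertices (`card_lt_of_mem_Yk`, `mem_Yk_of_card_lt`). This property passes to every
vertex `y` of a geodesic from `u` to `v`: by the triangle inequality, a ball about `y` of radius
less than `dist(y,v)` lies in a ball about `u` of radius less than `dist(u,v)`.

If `y ∈ Y_k(v)` has distance exactly `2^j + 1` from `v`, then the ball of radius `2^j` about `y` has
fewer than `k` vertices, while every `u ∈ Y_k(v)` with `2^j + 1 < dist(u,v) ≤ 2^(j+1) + 1` lies in
such a ball: take `y` on a geodesic from `u` to `v`. Hence passing from the ball of radius `2^j + 1`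
about `v` to that of radius `2^(j+1) + 1` multiplies the number of elements of `Y_k(v)` by at most
`k` (`ncard_Yk_inter_succ`). The process starts with `Γ_2(v)`, which has at most
`1 + d (1 + d) ≤ d ^ 3` vertices. It exhausts `Y_k(v)` after `⌊log₂ k⌋ + 1` steps, because
`u ∈ Y_k(v)` forces `dist(u,v) ≤ k`: a geodesic puts `dist(u,v)` vertices into the ball of radius
`dist(u,v) - 1` about `u`.
-/

open Classical

noncomputable section

/-- `Y_k(v) = {u : v ∈ B_k(u)}`. -/
def Yk {V : Type*} (G : SimpleGraph V) (k : ℕ) (v : V) : Set V :=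
  {u | v ∈ Bk G k u}

theorem exists_dist_split {V : Type*} {G : SimpleGraph V} (hconn : G.Connected) (u v : V) {i : ℕ}
    (hi : i ≤ G.dist u v) : ∃ y, G.dist u y + i = G.dist u v ∧ G.dist y v = i := by
  obtain ⟨p, hp⟩ := hconn.exists_walk_length_eq_dist u v
  refine ⟨p.getVert (p.length - i), ?_⟩
  have h1 := SimpleGraph.dist_le (p.take (p.length - i))
  have h2 := SimpleGraph.dist_le (p.drop (p.length - i))
  have h3 := hconn.dist_triangle (u := u) (v := p.getVert (p.length - i)) (w := v)
  rw [SimpleGraph.Walk.take_length] at h1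
  rw [SimpleGraph.Walk.drop_length] at h2
  omega

theorem card_lt_of_mem_Yk {V : Type*} {G : SimpleGraph V} {k : ℕ} {u v : V} (hu : u ∈ Yk G k v)
    {m : ℕ} (hm : m < G.dist u v) : (Gamma G u m).ncard < k := by
  have h : G.dist v u ≤ ellk G k u := hu
  rw [SimpleGraph.dist_comm] at h
  have hlt : m < sInf {ℓ : ℕ | k ≤ (Gamma G u ℓ).ncard} := lt_of_lt_of_le hm h
  simpa using Nat.notMem_of_lt_sInf hlt

/-- The hypothesis `k ≤ |V|` ensures that `ellk` is attained, so that its `sInf` is not the junk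
value at the empty set. -/
theorem mem_Yk_of_card_lt {V : Type*} [Fintype V] {G : SimpleGraph V}
    {k : ℕ} (hkn : k ≤ Fintype.card V) {u v : V}
    (h : ∀ m < G.dist u v, (Gamma G u m).ncard < k) : u ∈ Yk G k v := by
  change G.dist v u ≤ ellk G k u
  rw [SimpleGraph.dist_comm]
  have hne : {ℓ : ℕ | k ≤ (Gamma G u ℓ).ncard}.Nonempty := by
    refine ⟨∑ w, G.dist w u, ?_⟩
    have : Gamma G u (∑ w, G.dist w u) = Set.univ := by
      ext x
      simpa [Gamma] using
        Finset.single_le_sum (f := fun w => G.dist w u) (fun _ _ => Nat.zero_le _)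
          (Finset.mem_univ x)
    simpa [this, Set.ncard_univ] using hkn
  by_contra! hlt
  exact absurd (Nat.sInf_mem hne) (not_le.2 (h _ hlt))

/-- `Y_k(v)` is closed under moving towards `v` along a geodesic. -/
theorem mem_Yk_of_geodesic {V : Type*} [Fintype V] {G : SimpleGraph V} (hconn : G.Connected)
    {k : ℕ} (hkn : k ≤ Fintype.card V) {u y v : V} (hu : u ∈ Yk G k v)
    (hy : G.dist u y + G.dist y v = G.dist u v) : y ∈ Yk G k v := by
  refine mem_Yk_of_card_lt hkn fun m hm => ?_
  refine lt_of_le_of_lt (Set.ncard_le_ncard ?_ (Set.toFinite _))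
    (card_lt_of_mem_Yk hu (m := G.dist u y + m) (by omega))
  intro x hx
  have hx' : G.dist x y ≤ m := hx
  have h := hconn.dist_triangle (u := x) (v := y) (w := u)
  have h' : G.dist y u = G.dist u y := SimpleGraph.dist_comm
  change G.dist x u ≤ _
  omega

theorem dist_le_of_mem_Yk {V : Type*} [Fintype V] {G : SimpleGraph V} (hconn : G.Connected)
    {k : ℕ} {u v : V} (hu : u ∈ Yk G k v) : G.dist u v ≤ k := by
  rcases Nat.eq_zero_or_pos (G.dist u v) with h0 | h0
  · omega
  have hlt := card_lt_of_mem_Yk hu (m := G.dist u v - 1) (by omega)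
  -- Distances to `u` take all the values `0, …, dist u v - 1` on the ball.
  have hsub : (Finset.range (G.dist u v) : Set ℕ) ⊆
      (fun x => G.dist x u) '' Gamma G u (G.dist u v - 1) := by
    intro i hi
    have hi' : i < G.dist u v := by simpa using hi
    obtain ⟨y, -, hy⟩ := exists_dist_split hconn v u (i := i)
      (by rw [SimpleGraph.dist_comm]; omega)
    refine ⟨y, ?_, hy⟩
    change G.dist y u ≤ _
    omega
  have h1 := Set.ncard_le_ncard hsub (Set.toFinite _)
  have h2 := Set.ncard_image_le (f := fun x => G.dist x u)
    (Set.toFinite (Gamma G u (G.dist u v - 1)))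
  rw [Set.ncard_coe_finset, Finset.card_range] at h1
  omega

theorem ncard_biUnion_le_mul {α β : Type*} [Finite α] [Finite β] (s : Set α) (f : α → Set β)
    (n : ℕ) (h : ∀ a ∈ s, (f a).ncard ≤ n) : (⋃ a ∈ s, f a).ncard ≤ s.ncard * n := by
  have := Fintype.ofFinite α
  have := Fintype.ofFinite β
  have key := Finset.card_biUnion_le_card_mul s.toFinset (fun a => (f a).toFinset) n
    (fun a ha => by
      rw [← Set.ncard_eq_toFinset_card']
      exact h a (by simpa using ha))
  rw [Set.ncard_eq_toFinset_card' s, Set.ncard_eq_toFinset_card' (⋃ a ∈ s, f a)]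
  refine le_trans (Finset.card_le_card ?_) key
  intro x
  simp

/-- The doubling step: a geodesic from a vertex of `Y_k(v)` to `v` meets the sphere of radius
`2^j + 1` about `v` in a vertex whose ball of radius `2^j` has fewer than `k` vertices. -/
theorem ncard_Yk_inter_succ {V : Type*} [Fintype V] {G : SimpleGraph V} (hconn : G.Connected)
    {k : ℕ} (hk1 : 1 ≤ k) (hkn : k ≤ Fintype.card V) (v : V) (j : ℕ) :
    (Yk G k v ∩ Gamma G v (2 ^ (j + 1) + 1)).ncard
      ≤ (Yk G k v ∩ Gamma G v (2 ^ j + 1)).ncard * k := by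
  -- A vertex inside the sphere represents only itself.
  let f : V → Set V := fun y => if G.dist y v = 2 ^ j + 1 then Gamma G y (2 ^ j) else {y}
  refine le_trans (Set.ncard_le_ncard (t := ⋃ y ∈ Yk G k v ∩ Gamma G v (2 ^ j + 1), f y) ?_
    (Set.toFinite _)) (ncard_biUnion_le_mul _ _ _ ?_)
  · rintro u ⟨hu, hur⟩
    have hur' : G.dist u v ≤ 2 ^ (j + 1) + 1 := hur
    rw [pow_succ] at hur'
    simp only [Set.mem_iUnion]
    rcases lt_or_ge (G.dist u v) (2 ^ j + 1) with hlt | hge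
    · exact ⟨u, ⟨hu, hlt.le⟩, by simp [f, hlt.ne]⟩
    · obtain ⟨y, h1, h2⟩ := exists_dist_split hconn u v hge
      refine ⟨y, ⟨mem_Yk_of_geodesic hconn hkn hu (by omega), h2.le⟩, ?_⟩
      simp only [f, if_pos h2]
      change G.dist u y ≤ _
      omega
  · rintro y ⟨hy, -⟩
    by_cases h : G.dist y v = 2 ^ j + 1
    · simp only [f, if_pos h]
      exact (card_lt_of_mem_Yk hy (by omega)).le
    · simpa only [f, if_neg h, Set.ncard_singleton] using hk1

theorem ncard_Gamma_succ {V : Type*} [Fintype V] {G : SimpleGraph V} (hconn : G.Connected)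
    {d : ℕ} (hdeg : ∀ v : V, (G.neighborSet v).ncard ≤ d) (r b : ℕ)
    (hb : ∀ w, (Gamma G w r).ncard ≤ b) (v : V) : (Gamma G v (r + 1)).ncard ≤ d * b + 1 := by
  have hsub : Gamma G v (r + 1) ⊆ insert v (⋃ w ∈ G.neighborSet v, Gamma G w r) := by
    intro u hu
    have hu' : G.dist u v ≤ r + 1 := hu
    rcases Nat.eq_zero_or_pos (G.dist u v) with h0 | h0
    · exact Or.inl (hconn.dist_eq_zero_iff.1 h0)
    · right
      obtain ⟨y, h1, h2⟩ := exists_dist_split hconn u v (i := 1) h0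
      simp only [Set.mem_iUnion]
      refine ⟨y, (SimpleGraph.dist_eq_one_iff_adj.1 h2).symm, ?_⟩
      change G.dist u y ≤ _
      omega
  have h1 := Set.ncard_le_ncard hsub (Set.toFinite _)
  have h2 := Set.ncard_insert_le v (⋃ w ∈ G.neighborSet v, Gamma G w r)
  have h3 := ncard_biUnion_le_mul (G.neighborSet v) (fun w => Gamma G w r) b (fun w _ => hb w)
  have h4 := Nat.mul_le_mul_right b (hdeg v)
  omega

theorem ncard_Gamma_two {V : Type*} [Fintype V] {G : SimpleGraph V} (hconn : G.Connected)
    {d : ℕ} (hd : 2 ≤ d) (hdeg : ∀ v : V, (G.neighborSet v).ncard ≤ d) (v : V) :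
    (Gamma G v 2).ncard ≤ d ^ 3 := by
  have h0 : ∀ w, (Gamma G w 0).ncard ≤ 1 := fun w => by
    have : Gamma G w 0 = {w} := by
      ext x
      simp [Gamma, hconn.dist_eq_zero_iff]
    simp [this]
  have h2 := ncard_Gamma_succ hconn hdeg 1 _ (ncard_Gamma_succ hconn hdeg 0 1 h0) v
  refine h2.trans ?_
  nlinarith [Nat.mul_le_mul hd hd, Nat.mul_le_mul_right (d ^ 2) hd]

theorem ncard_Yk_inter_le {V : Type*} [Fintype V] {G : SimpleGraph V} (hconn : G.Connected)
    {d : ℕ} (hd : 2 ≤ d) (hdeg : ∀ v : V, (G.neighborSet v).ncard ≤ d)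
    {k : ℕ} (hk1 : 1 ≤ k) (hkn : k ≤ Fintype.card V) (v : V) (j : ℕ) :
    (Yk G k v ∩ Gamma G v (2 ^ j + 1)).ncard ≤ d ^ 3 * k ^ j := by
  induction j with
  | zero =>
    simpa using (Set.ncard_le_ncard Set.inter_subset_right (Set.toFinite _)).trans
      (ncard_Gamma_two hconn hd hdeg v)
  | succ j ih =>
    calc _ ≤ _ := ncard_Yk_inter_succ hconn hk1 hkn v j
      _ ≤ d ^ 3 * k ^ j * k := Nat.mul_le_mul_right k ih
      _ = _ := by ring

/-- If `G` has maximum degree at most `d` (with `d ≥ 2`) and `1 ≤ k ≤ n`, then for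
every vertex `v`, `|Y_k(v)| ≤ d^3 · k^(log₂ k + 1)` (real exponent). -/
theorem Yk_card_le {V : Type*} [Fintype V]
    (G : SimpleGraph V) (hconn : G.Connected)
    (d : ℕ) (hd : 2 ≤ d) (hdeg : ∀ v : V, (G.neighborSet v).ncard ≤ d)
    (k : ℕ) (hk1 : 1 ≤ k) (hkn : k ≤ Fintype.card V)
    (v : V) :
    ((Yk G k v).ncard : ℝ) ≤ (d : ℝ) ^ 3 * (k : ℝ) ^ (Real.logb 2 k + 1) := by
  have hsub : Yk G k v ⊆ Yk G k v ∩ Gamma G v (2 ^ (Nat.log 2 k + 1) + 1) := by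
    refine fun u hu => ⟨hu, ?_⟩
    have h1 := dist_le_of_mem_Yk hconn hu
    have h2 := Nat.lt_pow_succ_log_self (b := 2) (by norm_num) k
    change G.dist u v ≤ _
    omega
  have hnat := (Set.ncard_le_ncard hsub (Set.toFinite _)).trans
    (ncard_Yk_inter_le hconn hd hdeg hk1 hkn v (Nat.log 2 k + 1))
  calc ((Yk G k v).ncard : ℝ) ≤ (d : ℝ) ^ 3 * (k : ℝ) ^ (Nat.log 2 k + 1) := by
        exact_mod_cast hnat
    _ ≤ (d : ℝ) ^ 3 * (k : ℝ) ^ (Real.logb 2 k + 1) := by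
        rw [← Real.rpow_natCast (k : ℝ)]
        have hlog : (Nat.log 2 k : ℝ) ≤ Real.logb 2 k := by
          exact_mod_cast Real.natLog_le_logb k 2
        gcongr
        · exact_mod_cast hk1
        · push_cast
          linarith

end
end

section
/- Let k be an integer with 1 ≤ k ≤ n and let v be a vertex of G. For every integer j with 3 ≤ j ≤ k, setting q = ⌈(j−1)/2⌉ + 1, it holds that |{u ∈ Y_k(v) : dist(u,v) = j}| ≤ k · |{w ∈ Y_k(v) : dist(w,v) = q}|. -/
/-! A vertex `u ≠ v` at distance `m` from `v` lies in `Y_k(v)` exactly when `|Γ_{m-1}(u)| < k`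
(`mem_Yk_iff`). Given `u ∈ Y_k(v)` at distance `j`, let `w` be the vertex at distance `q` from `v`
on a geodesic from `u` to `v`. As `dist(u,w) = j - q`, the ball `Γ_{q-1}(w)` lies in `Γ_{j-1}(u)`,
so it has fewer than `k` elements and `w ∈ Y_k(v)`. Since `j - q ≤ q - 1`, every `u` sent to a given
`w` belongs to `Γ_{q-1}(w)`, so the map `u ↦ w` has fibres of size less than `k`. -/

open Classical

noncomputable section

/-- A vertex on a geodesic from `u` to `v`, at prescribed distance from `v`. -/
theorem exists_dist_eq_of_le {V : Type*} {G : SimpleGraph V} (hconn : G.Connected)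
    {u v : V} {q : ℕ} (hq : q ≤ G.dist u v) :
    ∃ w, G.dist w v = q ∧ G.dist u w = G.dist u v - q := by
  obtain ⟨p, hp⟩ := hconn.exists_walk_length_eq_dist u v
  refine ⟨p.getVert (G.dist u v - q), ?_⟩
  have h1 := SimpleGraph.dist_le (p.take (G.dist u v - q))
  have h2 := SimpleGraph.dist_le (p.drop (G.dist u v - q))
  rw [SimpleGraph.Walk.take_length] at h1
  rw [SimpleGraph.Walk.drop_length] at h2
  have h3 := hconn.dist_triangle (u := u) (v := p.getVert (G.dist u v - q)) (w := v)
  omega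

/-- Off `v` itself, membership in `Y_k(v)` says that the largest ball around `u` avoiding `v`
has fewer than `k` vertices. -/
theorem mem_Yk_iff {V : Type*} [Fintype V] {G : SimpleGraph V}
    {k : ℕ} (hkn : k ≤ Fintype.card V) {u v : V} {m : ℕ} (huv : G.dist u v = m + 1) :
    u ∈ Yk G k v ↔ (Gamma G u m).ncard < k := by
  have hmono : ∀ {a b : ℕ}, a ≤ b → (Gamma G u a).ncard ≤ (Gamma G u b).ncard := fun hab =>
    Set.ncard_le_ncard (fun x (hx : G.dist x u ≤ _) => le_trans hx hab) (Set.toFinite _)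
  -- Some ball has at least `k` vertices, so the infimum in `ellk` is not the junk value `0`.
  have hne : {ℓ : ℕ | k ≤ (Gamma G u ℓ).ncard}.Nonempty := by
    refine ⟨∑ x, G.dist x u, ?_⟩
    have : Gamma G u (∑ x, G.dist x u) = Set.univ := Set.eq_univ_of_forall fun x =>
      Finset.single_le_sum (f := fun x => G.dist x u) (fun _ _ => Nat.zero_le _)
        (Finset.mem_univ x)
    rw [Set.mem_ofPred_eq, this, Set.ncard_univ, Nat.card_eq_fintype_card]
    exact hkn
  change G.dist v u ≤ ellk G k u ↔ _
  rw [SimpleGraph.dist_comm, huv]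
  constructor
  · intro h
    by_contra hc
    have : ellk G k u ≤ m := Nat.sInf_le (not_lt.mp hc)
    omega
  · intro h
    by_contra hc
    have h1 : k ≤ (Gamma G u (ellk G k u)).ncard := Nat.sInf_mem hne
    have h2 := hmono (show ellk G k u ≤ m by omega)
    omega

/-- For every `3 ≤ j ≤ k`, setting `q = ⌈(j−1)/2⌉ + 1`, the number of vertices of
`Y_k(v)` at distance exactly `j` from `v` is at most `k` times the number of vertices
of `Y_k(v)` at distance exactly `q` from `v`. -/
theorem Yk_level_card_le {V : Type*} [Fintype V]
    (G : SimpleGraph V) (hconn : G.Connected)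
    (d : ℕ) (hdeg : ∀ v : V, (G.neighborSet v).ncard ≤ d)
    (k : ℕ) (hk1 : 1 ≤ k) (hkn : k ≤ Fintype.card V)
    (v : V) (j q : ℕ) (hj3 : 3 ≤ j) (hjk : j ≤ k)
    (hq : q = ((j - 1) + 1) / 2 + 1) :
    {u | u ∈ Yk G k v ∧ G.dist u v = j}.ncard ≤
      k * {u | u ∈ Yk G k v ∧ G.dist u v = q}.ncard := by
  obtain ⟨m, rfl⟩ : ∃ m, q = m + 1 := ⟨_, hq⟩
  obtain ⟨i, rfl⟩ : ∃ i, j = i + 1 := ⟨j - 1, by omega⟩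
  have key : ∀ u, u ∈ Yk G k v ∧ G.dist u v = i + 1 →
      ∃ w, (w ∈ Yk G k v ∧ G.dist w v = m + 1) ∧ u ∈ Gamma G w m := by
    rintro u ⟨hu, huv⟩
    obtain ⟨w, hwv, huw⟩ := exists_dist_eq_of_le hconn (show m + 1 ≤ G.dist u v by omega)
    refine ⟨w, ⟨(mem_Yk_iff hkn hwv).2 ?_, hwv⟩, show G.dist u w ≤ m by omega⟩
    refine lt_of_le_of_lt (Set.ncard_le_ncard ?_ (Set.toFinite _)) ((mem_Yk_iff hkn huv).1 hu)
    intro x (hx : G.dist x w ≤ m)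
    change G.dist x u ≤ i
    have := hconn.dist_triangle (u := x) (v := w) (w := u)
    rw [SimpleGraph.dist_comm (u := w)] at this
    omega
  choose! f hf hfm using key
  rw [Set.ncard_eq_toFinset_card', Set.ncard_eq_toFinset_card']
  refine Finset.card_le_mul_card_image_of_maps_to (f := f) ?_ k ?_
  · intro u hu
    simpa using hf u (by simpa using hu)
  · intro w hw
    obtain ⟨hwY, hwv⟩ : w ∈ Yk G k v ∧ G.dist w v = m + 1 := by simpa using hw
    refine le_trans ?_ ((mem_Yk_iff hkn hwv).1 hwY).le
    rw [← Set.ncard_coe_finset]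
    refine Set.ncard_le_ncard ?_ (Set.toFinite _)
    intro u hu
    obtain ⟨huY, rfl⟩ : (u ∈ Yk G k v ∧ G.dist u v = i + 1) ∧ f u = w := by simpa using hu
    exact hfm u huY

end
end

section
/- Suppose G has maximum degree at most d with d ≥ 2, and let k be an integer with 1 ≤ k ≤ n. For a vertex v, let S_v = {u ∈ V : B_k(u) ∩ B_k(v) ≠ ∅}. Then S_v ⊆ ⋃_{u ∈ B_k(v)} Y_k(u), and consequently |S_v| ≤ d^4 · k^{log₂(k) + 2} (where the exponent is a real number). -/
/-!
Everything reduces to `|Y_k(v)| ≤ d^3 k^(⌊log₂ k⌋ + 1)`, since `S_v` is covered by the sets `Y_k(u)`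
with `u ∈ B_k(v)`, and `|B_k(v)| ≤ d k`: the ball of radius `ℓ_k(v) - 1` has fewer than `k` vertices,
so one more step reaches at most `1 + d (k - 1)` vertices.

A vertex `u ∈ Y_k(v)` has fewer than `k` vertices in every ball of radius `m < dist(u, v)`; call such
a vertex *sparse* towards `v`. Two properties drive the count. First, a vertex `w` on a geodesic
from a sparse `u` to `v` is sparse, because `Γ_m(w) ⊆ Γ_{m + dist(u, w)}(u)`. Second, a sparse `u` at
distance `r ≥ 1` from `v` has `r ≤ |Γ_{r-1}(u)| < k`, as a geodesic to `v` meets every sphere around `u`.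

Let `a_J` be the number of sparse vertices within distance `2^J + 1` of `v`. Put `s = 2^J + 1`, so that
`2^(J+1) + 1 = 2s - 1`. A sparse vertex at distance between `s` and `2s - 1` lies in `Γ_{s-1}(w)`
for some sparse `w` at distance exactly `s`, and that ball has at most `k - 1` vertices. Hence
`a_{J+1} ≤ a_J + (k - 1) a_J = k a_J`. Together with `a_0 ≤ |Γ_2(v)| ≤ 1 + d + d^2 ≤ d^3` this gives
`a_J ≤ d^3 k^J`, and `J = ⌊log₂ k⌋ + 1` captures all sparse vertices because `k < 2^J`.
-/

open Classical

noncomputable section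

theorem ncard_biUnion_le_mul_s7 {V : Type*} [Fintype V] (A : Set V) (f : V → Set V) (c : ℕ)
    (h : ∀ a ∈ A, (f a).ncard ≤ c) : (⋃ a ∈ A, f a).ncard ≤ A.ncard * c := by
  have e : (⋃ a ∈ A, f a) = ((A.toFinset.biUnion fun a => (f a).toFinset : Finset V) : Set V) := by
    ext x; simp
  rw [e, Set.ncard_coe_finset, Set.ncard_eq_toFinset_card']
  refine Finset.card_biUnion_le_card_mul _ _ _ fun a ha => ?_
  rw [← Set.ncard_eq_toFinset_card']
  exact h a (by simpa using ha)

/-- A geodesic from `u` to `v` has a vertex at each prescribed distance `s ≤ dist(u, v)` from `v`. -/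
theorem exists_on_geodesic {V : Type*} {G : SimpleGraph V} (hconn : G.Connected) (u v : V) {s : ℕ}
    (hs : s ≤ G.dist u v) : ∃ w, G.dist w v = s ∧ G.dist u w = G.dist u v - s := by
  obtain ⟨p, hp⟩ := hconn.exists_walk_length_eq_dist u v
  have h1 := SimpleGraph.dist_le (p.take (G.dist u v - s))
  have h2 := SimpleGraph.dist_le (p.drop (G.dist u v - s))
  have h3 := hconn.dist_triangle (u := u) (v := p.getVert (G.dist u v - s)) (w := v)
  rw [SimpleGraph.Walk.take_length] at h1
  rw [SimpleGraph.Walk.drop_length] at h2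
  exact ⟨p.getVert (G.dist u v - s), by omega, by omega⟩

theorem ncard_Gamma_zero {V : Type*} {G : SimpleGraph V} (hconn : G.Connected) (v : V) :
    (Gamma G v 0).ncard = 1 := by
  have : Gamma G v 0 = {v} := by
    ext x; simp [Gamma, hconn.dist_eq_zero_iff]
  simp [this]

theorem ncard_Gamma_succ_le {V : Type*} [Fintype V] {G : SimpleGraph V} (hconn : G.Connected)
    {d : ℕ} (hdeg : ∀ v : V, (G.neighborSet v).ncard ≤ d) (v : V) (m : ℕ) :
    (Gamma G v (m + 1)).ncard ≤ (Gamma G v m).ncard * d + 1 := by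
  have hsub : Gamma G v (m + 1) ⊆ (⋃ w ∈ Gamma G v m, G.neighborSet w) ∪ {v} := by
    intro u hu
    rcases Nat.eq_zero_or_pos (G.dist u v) with h0 | h0
    · right; exact hconn.dist_eq_zero_iff.1 h0
    · left
      obtain ⟨w, hw1, hw2⟩ := exists_on_geodesic hconn u v (Nat.sub_le (G.dist u v) 1)
      have hu' : G.dist u v ≤ m + 1 := hu
      refine Set.mem_biUnion (x := w) (show G.dist w v ≤ m by omega) ?_
      have : G.dist u w = 1 := by omega
      exact (SimpleGraph.dist_eq_one_iff_adj.1 this).symm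
  calc (Gamma G v (m + 1)).ncard
      ≤ ((⋃ w ∈ Gamma G v m, G.neighborSet w) ∪ {v}).ncard := Set.ncard_le_ncard hsub
    _ ≤ (⋃ w ∈ Gamma G v m, G.neighborSet w).ncard + ({v} : Set V).ncard := Set.ncard_union_le _ _
    _ ≤ _ := by
      rw [Set.ncard_singleton]
      exact Nat.add_le_add_right (ncard_biUnion_le_mul_s7 _ _ _ fun w _ => hdeg w) 1

theorem ncard_Gamma_lt_of_lt_ellk {V : Type*} {G : SimpleGraph V} {k m : ℕ} {u : V}
    (h : m < ellk G k u) : (Gamma G u m).ncard < k :=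
  not_le.1 (Nat.notMem_of_lt_sInf (s := {ℓ : ℕ | k ≤ (Gamma G u ℓ).ncard}) h)

theorem ncard_Bk_le {V : Type*} [Fintype V] {G : SimpleGraph V} (hconn : G.Connected)
    {d : ℕ} (hd : 2 ≤ d) (hdeg : ∀ v : V, (G.neighborSet v).ncard ≤ d) {k : ℕ} (hk : 1 ≤ k)
    (v : V) : (Bk G k v).ncard ≤ d * k := by
  unfold Bk
  rcases h : ellk G k v with _ | m
  · rw [ncard_Gamma_zero hconn]; nlinarith
  · have h1 := ncard_Gamma_succ_le hconn hdeg v m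
    have h2 : (Gamma G v m).ncard + 1 ≤ k := ncard_Gamma_lt_of_lt_ellk (by omega)
    nlinarith

/-- The vertices `u` that are sparse towards `v`: every ball around `u` of radius less than
`dist(u, v)` has fewer than `k` vertices. -/
def Sparse {V : Type*} (G : SimpleGraph V) (k : ℕ) (v : V) : Set V :=
  {u | ∀ m < G.dist u v, (Gamma G u m).ncard < k}

theorem Yk_subset_Sparse {V : Type*} (G : SimpleGraph V) (k : ℕ) (v : V) :
    Yk G k v ⊆ Sparse G k v := by
  intro u hu m hm
  have hu' : G.dist v u ≤ ellk G k u := hu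
  rw [SimpleGraph.dist_comm] at hu'
  exact ncard_Gamma_lt_of_lt_ellk (by omega)

theorem sparse_of_on_geodesic {V : Type*} [Fintype V] {G : SimpleGraph V} (hconn : G.Connected)
    {k : ℕ} {u v w : V} (hu : u ∈ Sparse G k v) (h : G.dist u w + G.dist w v = G.dist u v) :
    w ∈ Sparse G k v := by
  intro m hm
  refine lt_of_le_of_lt (Set.ncard_le_ncard ?_) (hu (m + G.dist u w) (by omega))
  intro x hx
  have hx' : G.dist x w ≤ m := hx
  have h3 := hconn.dist_triangle (u := x) (v := w) (w := u)
  rw [SimpleGraph.dist_comm (u := w) (v := u)] at h3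
  exact show G.dist x u ≤ m + G.dist u w by omega

theorem lt_ncard_Gamma {V : Type*} [Fintype V] {G : SimpleGraph V} (hconn : G.Connected)
    {u v : V} {m : ℕ} (hm : m ≤ G.dist u v) : m < (Gamma G u m).ncard := by
  have hsub : Set.Iic m ⊆ (fun x => G.dist x u) '' Gamma G u m := by
    intro i hi
    have hi' : i ≤ m := hi
    obtain ⟨w, hw, -⟩ := exists_on_geodesic hconn v u (s := i)
      (by rw [SimpleGraph.dist_comm]; omega)
    exact ⟨w, show G.dist w u ≤ m by omega, hw⟩
  have h1 := (Set.ncard_le_ncard hsub (Set.toFinite _)).trans (Set.ncard_image_le (Set.toFinite _))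
  have h2 : (Set.Iic m).ncard = m + 1 := by
    rw [← Finset.coe_Iic, Set.ncard_coe_finset, Nat.card_Iic]
  omega

theorem dist_le_of_sparse {V : Type*} [Fintype V] {G : SimpleGraph V} (hconn : G.Connected)
    {k : ℕ} {u v : V} (hu : u ∈ Sparse G k v) : G.dist u v ≤ k := by
  rcases Nat.eq_zero_or_pos (G.dist u v) with h0 | h0
  · omega
  · have h1 := hu (G.dist u v - 1) (by omega)
    have h2 := lt_ncard_Gamma hconn (Nat.sub_le (G.dist u v) 1)
    omega

/-- The doubling step: going from radius `s` to `2s - 1` (here `s = t + 1`) multiplies the number of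
sparse vertices by at most `k`. -/
theorem ncard_sparse_double {V : Type*} [Fintype V] {G : SimpleGraph V} (hconn : G.Connected)
    {k : ℕ} (hk : 1 ≤ k) (v : V) (t : ℕ) :
    (Sparse G k v ∩ Gamma G v (2 * t + 1)).ncard ≤
      (Sparse G k v ∩ Gamma G v (t + 1)).ncard * k := by
  set A := Sparse G k v ∩ Gamma G v (t + 1)
  set A' := {w ∈ A | G.dist w v = t + 1}
  have hsub : Sparse G k v ∩ Gamma G v (2 * t + 1) ⊆ A ∪ ⋃ w ∈ A', Gamma G w t := by
    rintro u ⟨hu, hur⟩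
    have hur' : G.dist u v ≤ 2 * t + 1 := hur
    rcases le_or_gt (G.dist u v) t with h | h
    · exact Or.inl ⟨hu, show G.dist u v ≤ t + 1 by omega⟩
    · right
      obtain ⟨w, hw1, hw2⟩ := exists_on_geodesic hconn u v (Nat.succ_le_of_lt h)
      have hw : w ∈ A' :=
        ⟨⟨sparse_of_on_geodesic hconn hu (by omega), hw1.le⟩, hw1⟩
      exact Set.mem_biUnion hw (show G.dist u w ≤ t by omega)
  have hball : (⋃ w ∈ A', Gamma G w t).ncard ≤ A'.ncard * (k - 1) :=
    ncard_biUnion_le_mul_s7 _ _ _ fun w hw =>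
      Nat.le_sub_one_of_lt (hw.1.1 t (by rw [hw.2]; omega))
  have hA' : A'.ncard ≤ A.ncard := Set.ncard_le_ncard (Set.sep_subset _ _)
  obtain ⟨j, rfl⟩ : ∃ j, k = j + 1 := ⟨k - 1, by omega⟩
  calc _ ≤ _ := Set.ncard_le_ncard hsub
    _ ≤ A.ncard + (⋃ w ∈ A', Gamma G w t).ncard := Set.ncard_union_le _ _
    _ ≤ A.ncard + A.ncard * j := by
      gcongr
      exact hball.trans (Nat.mul_le_mul_right _ hA')
    _ = _ := by ring

theorem ncard_sparse_le {V : Type*} [Fintype V] {G : SimpleGraph V} (hconn : G.Connected)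
    {d : ℕ} (hd : 2 ≤ d) (hdeg : ∀ v : V, (G.neighborSet v).ncard ≤ d) {k : ℕ} (hk : 1 ≤ k)
    (v : V) (J : ℕ) : (Sparse G k v ∩ Gamma G v (2 ^ J + 1)).ncard ≤ d ^ 3 * k ^ J := by
  induction J with
  | zero =>
    have h1 := ncard_Gamma_succ_le hconn hdeg v 0
    have h2 := ncard_Gamma_succ_le hconn hdeg v 1
    rw [ncard_Gamma_zero hconn] at h1
    have h3 : (Sparse G k v ∩ Gamma G v (2 ^ 0 + 1)).ncard ≤ (Gamma G v (1 + 1)).ncard :=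
      Set.ncard_le_ncard Set.inter_subset_right
    have h4 : (Gamma G v (0 + 1)).ncard * d ≤ (1 * d + 1) * d := Nat.mul_le_mul_right _ h1
    have h5 : (1 * d + 1) * d + 1 ≤ d ^ 3 := by
      obtain ⟨e, rfl⟩ := Nat.exists_eq_add_of_le hd
      ring_nf
      nlinarith [Nat.zero_le (e ^ 3), Nat.zero_le (e ^ 2)]
    rw [pow_zero k, mul_one]
    exact h3.trans (h2.trans ((Nat.add_le_add_right h4 1).trans h5))
  | succ J ih =>
    calc _ = (Sparse G k v ∩ Gamma G v (2 * 2 ^ J + 1)).ncard := by rw [pow_succ, mul_comm]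
      _ ≤ _ := ncard_sparse_double hconn hk v (2 ^ J)
      _ ≤ d ^ 3 * k ^ J * k := Nat.mul_le_mul_right _ ih
      _ = _ := by ring

theorem ncard_Yk_le {V : Type*} [Fintype V] {G : SimpleGraph V} (hconn : G.Connected)
    {d : ℕ} (hd : 2 ≤ d) (hdeg : ∀ v : V, (G.neighborSet v).ncard ≤ d) {k : ℕ} (hk : 1 ≤ k)
    (v : V) : (Yk G k v).ncard ≤ d ^ 3 * k ^ (Nat.log 2 k + 1) := by
  refine le_trans (Set.ncard_le_ncard fun u hu => ?_)
    (ncard_sparse_le hconn hd hdeg hk v (Nat.log 2 k + 1))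
  have hs := Yk_subset_Sparse G k v hu
  have h1 := dist_le_of_sparse hconn hs
  have h2 : k < 2 ^ (Nat.log 2 k + 1) := Nat.lt_pow_succ_log_self (by norm_num) k
  exact ⟨hs, show G.dist u v ≤ 2 ^ (Nat.log 2 k + 1) + 1 by omega⟩

/-- For `S_v = {u : B_k(u) ∩ B_k(v) ≠ ∅}` we have `S_v ⊆ ⋃_{u ∈ B_k(v)} Y_k(u)`, and
consequently `|S_v| ≤ d^4 · k^(log₂ k + 2)` (real exponent). -/
theorem Sv_subset_and_card_le {V : Type*} [Fintype V]
    (G : SimpleGraph V) (hconn : G.Connected)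
    (d : ℕ) (hd : 2 ≤ d) (hdeg : ∀ v : V, (G.neighborSet v).ncard ≤ d)
    (k : ℕ) (hk1 : 1 ≤ k) (hkn : k ≤ Fintype.card V)
    (v : V) :
    {u : V | Bk G k u ∩ Bk G k v ≠ ∅} ⊆ (⋃ u ∈ Bk G k v, Yk G k u) ∧
      (({u : V | Bk G k u ∩ Bk G k v ≠ ∅}).ncard : ℝ) ≤
        (d : ℝ) ^ 4 * (k : ℝ) ^ (Real.logb 2 k + 2) := by
  have hsub : {u : V | Bk G k u ∩ Bk G k v ≠ ∅} ⊆ (⋃ u ∈ Bk G k v, Yk G k u) := by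
    intro u hu
    obtain ⟨w, hwu, hwv⟩ := Set.nonempty_iff_ne_empty.2 hu
    exact Set.mem_biUnion hwv hwu
  refine ⟨hsub, ?_⟩
  have hnat : ({u : V | Bk G k u ∩ Bk G k v ≠ ∅}).ncard ≤ d ^ 4 * k ^ (Nat.log 2 k + 2) :=
    calc _ ≤ _ := Set.ncard_le_ncard hsub
      _ ≤ (Bk G k v).ncard * (d ^ 3 * k ^ (Nat.log 2 k + 1)) :=
        ncard_biUnion_le_mul_s7 _ _ _ fun u _ => ncard_Yk_le hconn hd hdeg hk1 u
      _ ≤ d * k * (d ^ 3 * k ^ (Nat.log 2 k + 1)) :=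
        Nat.mul_le_mul_right _ (ncard_Bk_le hconn hd hdeg hk1 v)
      _ = _ := by ring
  have hlog : ((Nat.log 2 k : ℕ) : ℝ) ≤ Real.logb 2 k := by
    exact_mod_cast Real.natLog_le_logb k 2
  calc _ ≤ ((d ^ 4 * k ^ (Nat.log 2 k + 2) : ℕ) : ℝ) := by exact_mod_cast hnat
    _ = (d : ℝ) ^ 4 * (k : ℝ) ^ (((Nat.log 2 k + 2 : ℕ)) : ℝ) := by
      rw [Real.rpow_natCast]; push_cast; ring
    _ ≤ _ := by
      refine mul_le_mul_of_nonneg_left ?_ (by positivity)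
      refine Real.rpow_le_rpow_of_exponent_le (by exact_mod_cast hk1) ?_
      push_cast
      linarith

end
end

section
/- Let s ≥ 1 and d ≥ 1 be integers. Every finite tree T with maximum degree at most d and at least s vertices admits a partition of its vertex set into nonempty parts, each of which induces a connected subgraph (a subtree) of T, such that every part has size at least s and at most s²·d². -/
/-!
Only connectedness and the degree bound matter: every connected vertex set `X` with `s ≤ |X|`
splits into connected parts of size between `s` and `s + d (s - 1)`, by peeling off one part at a
time.

Among the connected `A ⊆ X` with `|A| ≥ s` whose complement `X \ A` is empty or connected, take one
of least size. Let `v ∈ A` be a vertex with a neighbour in `X \ A` (any vertex of `A` if `A = X`).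
A component `C` of `A \ {v}` is connected, and so is `X \ C`, because `v` is adjacent to `X \ A` and
to every component of `A \ {v}`. Minimality gives `|C| ≤ s - 1`. Each component contains one of the
at most `d` neighbours of `v`, hence `|A| ≤ 1 + d (s - 1)` (`exists_small_piece`). If
`|X \ A| ≥ s`, recurse on `X \ A`; otherwise `|X| ≤ (1 + d (s - 1)) + (s - 1) = s + d (s - 1)` and
`X` itself is an admissible part (`exists_partition`). Finally `s + d (s - 1) ≤ s² d²`.
-/

namespace TreeDecomposition

variable {V : Type*} {G : SimpleGraph V}

/-- `S` induces a connected (in particular nonempty) subgraph of `G`. -/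
def Conn (G : SimpleGraph V) (S : Set V) : Prop := (G.induce S).Connected

theorem Conn.nonempty {S : Set V} (h : Conn G S) : S.Nonempty :=
  Set.nonempty_coe_sort.1 (SimpleGraph.Connected.nonempty h)

theorem conn_singleton (v : V) : Conn G {v} := by
  unfold Conn
  rw [SimpleGraph.induce_singleton_eq_top]
  exact SimpleGraph.connected_top

theorem Conn.union {S T : Set V} (hS : Conn G S) (hT : Conn G T) {x : V} (hx : x ∈ S)
    (hx' : x ∈ T) : Conn G (S ∪ T) :=
  SimpleGraph.induce_union_connected hS.preconnected hT.preconnected ⟨x, hx, hx'⟩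

theorem Conn.insert {S : Set V} (hS : Conn G S) {x y : V} (hx : x ∈ S) (hxy : G.Adj x y) :
    Conn G (insert y S) := by
  have h := hS.union (T := {x, y}) (SimpleGraph.induce_pair_connected_of_adj hxy) hx (by simp)
  have e : S ∪ {x, y} = Insert.insert y S := by
    ext z
    simp only [Set.mem_union, Set.mem_insert_iff, Set.mem_singleton_iff]
    constructor
    · rintro (h | rfl | h) <;> tauto
    · tauto
  rwa [e] at h

theorem conn_of_patches {S : Set V} (u : V) (hu : u ∈ S)
    (h : ∀ z ∈ S, ∃ B ⊆ S, u ∈ B ∧ z ∈ B ∧ Conn G B) : Conn G S := by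
  refine SimpleGraph.induce_connected_of_patches u hu ?_
  intro z hz
  obtain ⟨B, hBS, huB, hzB, hB⟩ := h z hz
  exact ⟨B, hBS, huB, hzB, SimpleGraph.Connected.preconnected hB _ _⟩

theorem Conn.exists_crossing {S A : Set V} (hS : Conn G S) {a b : V} (ha : a ∈ A) (haS : a ∈ S)
    (hb : b ∉ A) (hbS : b ∈ S) : ∃ x ∈ A, ∃ y ∈ S \ A, G.Adj x y := by
  obtain ⟨p⟩ := SimpleGraph.Connected.preconnected hS ⟨a, haS⟩ ⟨b, hbS⟩
  obtain ⟨e, -, h1, h2⟩ := p.exists_boundary_dart {z | (z : V) ∈ A} ha hb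
  exact ⟨e.fst, h1, e.snd, ⟨e.snd.2, h2⟩, e.adj⟩

/-- The connected component of `w` in the subgraph induced by `S`, as the union of the connected
subsets of `S` containing `w`; it is empty when `w ∉ S`. -/
def comp (G : SimpleGraph V) (S : Set V) (w : V) : Set V :=
  {u | ∃ B ⊆ S, w ∈ B ∧ u ∈ B ∧ Conn G B}

theorem comp_subset {S : Set V} {w : V} : comp G S w ⊆ S := fun _ ⟨_, hB, _, hu, _⟩ => hB hu

theorem mem_comp_self {S : Set V} {w : V} (hw : w ∈ S) : w ∈ comp G S w :=
  ⟨{w}, by simpa using hw, rfl, rfl, conn_singleton w⟩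

theorem mem_comp_symm {S : Set V} {u w : V} (h : u ∈ comp G S w) : w ∈ comp G S u := by
  obtain ⟨B, h1, h2, h3, h4⟩ := h
  exact ⟨B, h1, h3, h2, h4⟩

theorem mem_comp_trans {S : Set V} {u w z : V} (h : u ∈ comp G S w) (h' : z ∈ comp G S u) :
    z ∈ comp G S w := by
  obtain ⟨B, h1, h2, h3, h4⟩ := h
  obtain ⟨D, k1, k2, k3, k4⟩ := h'
  exact ⟨B ∪ D, Set.union_subset h1 k1, Or.inl h2, Or.inr k3, h4.union k4 h3 k2⟩

theorem conn_comp {S : Set V} {w : V} (hw : w ∈ S) : Conn G (comp G S w) := by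
  refine conn_of_patches w (mem_comp_self hw) ?_
  rintro z ⟨B, h1, h2, h3, h4⟩
  exact ⟨B, fun y hy => ⟨B, h1, h2, hy, h4⟩, h2, h3, h4⟩

/-- Every component of `A \ {v}` contains a neighbour of `v`: an edge leaving the component
inside the connected set `A` can only end at `v`. -/
theorem exists_adj_comp {A : Set V} (hA : Conn G A) {v u : V} (hv : v ∈ A) (hu : u ∈ A \ {v}) :
    ∃ x ∈ comp G (A \ {v}) u, G.Adj x v := by
  obtain ⟨x, hx, y, ⟨hyA, hy⟩, hxy⟩ := hA.exists_crossing (A := comp G (A \ {v}) u)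
    (mem_comp_self hu) hu.1 (fun h => (comp_subset h).2 rfl) hv
  by_cases hyv : y = v
  · exact ⟨x, hx, hyv ▸ hxy⟩
  · refine absurd ?_ hy
    have hc := (conn_comp (G := G) hu).insert hx hxy
    exact ⟨_, Set.insert_subset ⟨hyA, hyv⟩ comp_subset, Or.inr (mem_comp_self hu), Or.inl rfl, hc⟩

/-- Deleting from `X` a component of `A \ {v}` leaves a connected set: all that remains is attached
to `v`. -/
theorem conn_diff_comp {X A : Set V} (hAX : A ⊆ X) (hA : Conn G A) {v w : V} (hv : v ∈ A)
    (hX : X \ A = ∅ ∨ Conn G (X \ A) ∧ ∃ y ∈ X \ A, G.Adj y v) :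
    Conn G (X \ comp G (A \ {v}) w) := by
  have hvC : v ∉ comp G (A \ {v}) w := fun h => (comp_subset h).2 rfl
  refine conn_of_patches v ⟨hAX hv, hvC⟩ ?_
  rintro z ⟨hzX, hzC⟩
  by_cases hzA : z ∈ A
  · by_cases hzv : z = v
    · subst hzv
      exact ⟨{z}, by simpa using ⟨hzX, hzC⟩, rfl, rfl, conn_singleton z⟩
    · have hz : z ∈ A \ {v} := ⟨hzA, hzv⟩
      obtain ⟨x, hx, hxv⟩ := exists_adj_comp hA hv hz
      refine ⟨_, ?_, Or.inl rfl, Or.inr (mem_comp_self hz), (conn_comp (G := G) hz).insert hx hxv⟩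
      refine Set.insert_subset ⟨hAX hv, hvC⟩ fun y hy => ⟨hAX (comp_subset hy).1, fun hyw => ?_⟩
      exact hzC (mem_comp_trans hyw (mem_comp_symm hy))
  · rcases hX with hX | ⟨hX, y, hy, hyv⟩
    · exact absurd (show z ∈ X \ A from ⟨hzX, hzA⟩) (by simp [hX])
    · refine ⟨_, ?_, Or.inl rfl, Or.inr ⟨hzX, hzA⟩, hX.insert hy hyv⟩
      exact Set.insert_subset ⟨hAX hv, hvC⟩ fun t ht =>
        ⟨ht.1, fun h => ht.2 (comp_subset h).1⟩

/-- A connected set of at least `s` vertices contains a connected set of size between `s` and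
`1 + d (s - 1)` whose removal leaves nothing or a connected set. -/
theorem exists_small_piece [Finite V] {d s : ℕ} (hs : 1 ≤ s)
    (hdeg : ∀ v : V, (G.neighborSet v).ncard ≤ d) {X : Set V} (hX : Conn G X)
    (hcard : s ≤ X.ncard) :
    ∃ A ⊆ X, Conn G A ∧ (X \ A = ∅ ∨ Conn G (X \ A)) ∧ s ≤ A.ncard ∧
      A.ncard ≤ 1 + d * (s - 1) := by
  obtain ⟨A, ⟨hAX, hA, hXA, hsA⟩, hmin⟩ := exists_minimalFor_of_wellFoundedLT
    (fun A : Set V => A ⊆ X ∧ Conn G A ∧ (X \ A = ∅ ∨ Conn G (X \ A)) ∧ s ≤ A.ncard)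
    Set.ncard ⟨X, subset_rfl, hX, Or.inl (by simp), hcard⟩
  refine ⟨A, hAX, hA, hXA, hsA, ?_⟩
  obtain ⟨v, hv, hXv⟩ : ∃ v ∈ A, X \ A = ∅ ∨ Conn G (X \ A) ∧ ∃ y ∈ X \ A, G.Adj y v := by
    obtain ⟨a, ha⟩ := hA.nonempty
    rcases hXA with h | h
    · exact ⟨a, ha, Or.inl h⟩
    · obtain ⟨b, hb⟩ := h.nonempty
      obtain ⟨x, hx, y, hy, hxy⟩ := hX.exists_crossing ha (hAX ha) hb.2 hb.1
      exact ⟨x, hx, Or.inr ⟨h, y, hy, hxy.symm⟩⟩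
  have hsmall : ∀ w, (comp G (A \ {v}) w).ncard ≤ s - 1 := by
    intro w
    by_cases hw : w ∈ A \ {v}
    · by_contra hlt
      have hlt' : (comp G (A \ {v}) w).ncard < A.ncard :=
        Set.ncard_lt_ncard ⟨fun y hy => (comp_subset hy).1, fun h => (comp_subset (h hv)).2 rfl⟩
      have := hmin (j := comp G (A \ {v}) w)
        ⟨fun y hy => hAX (comp_subset hy).1, conn_comp hw,
          Or.inr (conn_diff_comp hAX hA hv hXv), by omega⟩ hlt'.le
      omega
    · have : comp G (A \ {v}) w = ∅ :=
        Set.eq_empty_of_forall_notMem fun y ⟨B, hB, hwB, _⟩ => hw (hB hwB)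
      simp [this]
  have hfin : (G.neighborSet v).Finite := Set.toFinite _
  have hcover : A ⊆ {v} ∪ ⋃ w ∈ hfin.toFinset, comp G (A \ {v}) w := by
    intro u hu
    by_cases huv : u = v
    · exact Or.inl huv
    · obtain ⟨x, hx, hxv⟩ := exists_adj_comp hA hv (u := u) ⟨hu, huv⟩
      refine Or.inr (Set.mem_biUnion (x := x) ?_ (mem_comp_symm hx))
      simpa using hxv.symm
  calc A.ncard ≤ _ := Set.ncard_le_ncard hcover
    _ ≤ ({v} : Set V).ncard + _ := Set.ncard_union_le _ _
    _ ≤ 1 + ∑ w ∈ hfin.toFinset, (comp G (A \ {v}) w).ncard := by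
        rw [Set.ncard_singleton]
        exact Nat.add_le_add_left (Finset.set_ncard_biUnion_le _ _) 1
    _ ≤ 1 + hfin.toFinset.card * (s - 1) :=
        Nat.add_le_add_left (Finset.sum_le_card_nsmul _ _ _ fun w _ => hsmall w) 1
    _ ≤ 1 + d * (s - 1) := by
        rw [← Set.ncard_eq_toFinset_card _ hfin]
        exact Nat.add_le_add_left (Nat.mul_le_mul_right _ (hdeg v)) 1

/-- Peeling off small pieces one at a time; an oversized `X` leaves at least `s` vertices after
each removal. -/
theorem exists_partition [Finite V] [DecidableEq V] {d s : ℕ} (hs : 1 ≤ s)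
    (hdeg : ∀ v : V, (G.neighborSet v).ncard ≤ d) (n : ℕ) :
    ∀ X : Finset V, X.card = n → Conn G (X : Set V) → s ≤ X.card →
      ∃ P : Finpartition X, ∀ Y ∈ P.parts,
        Conn G (Y : Set V) ∧ s ≤ Y.card ∧ Y.card ≤ s + d * (s - 1) := by
  induction n using Nat.strong_induction_on with
  | _ n ih =>
  intro X hXn hX hsX
  by_cases hbig : X.card ≤ s + d * (s - 1)
  · have hne : X ≠ ⊥ := fun h => by simp [h] at hsX; omega
    refine ⟨Finpartition.indiscrete hne, fun Y hY => ?_⟩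
    obtain rfl : Y = X := by simpa using hY
    exact ⟨hX, hsX, hbig⟩
  obtain ⟨A, hAX, hA, hXA, hsA, hAle⟩ :=
    exists_small_piece hs hdeg hX (by rwa [Set.ncard_coe_finset])
  obtain ⟨A, rfl⟩ : ∃ A' : Finset V, (A' : Set V) = A :=
    ⟨(Set.toFinite A).toFinset, by simp⟩
  rw [Set.ncard_coe_finset] at hsA hAle
  have hAX' : A ⊆ X := by exact_mod_cast hAX
  have hsum := Finset.card_sdiff_add_card_eq_card hAX'
  rw [← Finset.coe_sdiff] at hXA
  have hconn : Conn G ((X \ A : Finset V) : Set V) := by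
    refine hXA.resolve_left fun h => ?_
    have : (X \ A).card = 0 := by rw [← Set.ncard_coe_finset, h, Set.ncard_empty]
    omega
  obtain ⟨P, hP⟩ := ih (X \ A).card (by omega) (X \ A) rfl hconn (by omega)
  have hAne : A ≠ ⊥ := fun h => by simp [h] at hsA; omega
  refine ⟨P.extend hAne Finset.sdiff_disjoint (Finset.sdiff_union_of_subset hAX'), ?_⟩
  intro Y hY
  rcases Finset.mem_insert.1 hY with rfl | hY
  · exact ⟨hA, hsA, by omega⟩
  · exact hP Y hY

theorem bound_le {d s : ℕ} (hd : 1 ≤ d) (hs : 1 ≤ s) : s + d * (s - 1) ≤ s ^ 2 * d ^ 2 := by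
  obtain ⟨t, rfl⟩ := Nat.exists_eq_add_of_le' hs
  obtain ⟨e, rfl⟩ := Nat.exists_eq_add_of_le' hd
  simp only [Nat.add_sub_cancel]
  ring_nf
  nlinarith [Nat.zero_le (t * e), Nat.zero_le (t * e ^ 2), Nat.zero_le (t ^ 2 * e),
    Nat.zero_le (t ^ 2 * e ^ 2)]

end TreeDecomposition

/-- Every finite tree with maximum degree at most `d` and at least `s` vertices admits a
partition of its vertex set into nonempty parts, each inducing a subtree, with every part
of size at least `s` and at most `s²·d²`. -/
theorem tree_decomposition {V : Type*} [Fintype V] [DecidableEq V]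
    (T : SimpleGraph V) (hconn : T.Connected) (hacyc : T.IsAcyclic)
    (d s : ℕ) (hd : 1 ≤ d) (hs : 1 ≤ s)
    (hdeg : ∀ v : V, (T.neighborSet v).ncard ≤ d)
    (hcard : s ≤ Fintype.card V) :
    ∃ P : Finpartition (Finset.univ : Finset V),
      ∀ X ∈ P.parts,
        (T.induce (X : Set V)).Connected ∧ s ≤ X.card ∧ X.card ≤ s ^ 2 * d ^ 2 := by
  have huniv : TreeDecomposition.Conn T ((Finset.univ : Finset V) : Set V) := by
    rw [Finset.coe_univ]
    exact (SimpleGraph.induceUnivIso T).connected_iff.2 hconn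
  obtain ⟨P, hP⟩ := TreeDecomposition.exists_partition hs hdeg _ Finset.univ rfl huniv hcard
  exact ⟨P, fun X hX => ⟨(hP X hX).1, (hP X hX).2.1,
    (hP X hX).2.2.trans (TreeDecomposition.bound_le hd hs)⟩⟩
end

section
/- Let G be a finite simple connected graph, let P be a partition of the vertex set of G into nonempty parts each inducing a connected subgraph of G, and let E' be a subset of the edges of G such that: (i) for every part X ∈ P, the subgraph of G' = (V, E') induced by X is connected and has diameter at most D (distances measured in the induced subgraph); and (ii) for every pair of distinct parts X, Y ∈ P joined by at least one edge of G, E' contains at least one edge with one endpoint in X and one endpoint in Y. Then for all vertices u, v: dist_{G'}(u,v) ≤ (D+1)·dist_G(u,v) + D. -/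
/-!
Every edge of `G` either stays inside a part or crosses between two distinct parts, and in the
latter case `E'` has some edge between the same two parts. Following a walk of `G` part by part
therefore costs at most `D` steps inside each part plus one crossing step per edge of the walk,
and at most `D` further steps in the part of the final vertex. The crossing edge in `E'` need not
land on the walk itself, so the induction on the walk (`exists_walk_of_walk`) is carried out for
an arbitrary starting vertex in the same part as the first vertex of the walk.
-/

open Classical

/-- A bound on the distance inside a connected induced subgraph is witnessed by a walk of the
whole graph. -/
theorem exists_walk_of_induce_dist_le {V : Type*} (H : SimpleGraph V) (S : Set V) (D : ℕ)
    (hconn : (H.induce S).Connected) (hdist : ∀ a b : S, (H.induce S).dist a b ≤ D)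
    {a b : V} (ha : a ∈ S) (hb : b ∈ S) : ∃ q : H.Walk a b, q.length ≤ D := by
  obtain ⟨q, hq⟩ := hconn.exists_walk_length_eq_dist ⟨a, ha⟩ ⟨b, hb⟩
  exact ⟨q.map (SimpleGraph.Embedding.induce S).toHom,
    ((SimpleGraph.Walk.length_map _ q).trans hq).trans_le (hdist _ _)⟩

/-- A walk of `G` from `u` to `v` is shadowed, from any vertex `a` in the part of `u`, by a walk
to `v` using only edges of `E'`. Starting anywhere in the part makes the induction go through. -/
theorem exists_walk_of_walk {V : Type*} [Fintype V] [DecidableEq V]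
    (G : SimpleGraph V) (P : Finpartition (Finset.univ : Finset V)) (D : ℕ) (E' : Set (Sym2 V))
    (hpart : ∀ X ∈ P.parts, ((SimpleGraph.fromEdgeSet E').induce (X : Set V)).Connected ∧
      ∀ a b : (X : Set V), ((SimpleGraph.fromEdgeSet E').induce (X : Set V)).dist a b ≤ D)
    (hcross : ∀ X ∈ P.parts, ∀ Y ∈ P.parts, X ≠ Y →
      (∃ x ∈ X, ∃ y ∈ Y, G.Adj x y) →
      ∃ e ∈ E', ∃ x ∈ X, ∃ y ∈ Y, e = s(x, y))
    {u v : V} (p : G.Walk u v) :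
    ∀ X ∈ P.parts, u ∈ X → ∀ a ∈ X,
      ∃ q : (SimpleGraph.fromEdgeSet E').Walk a v, q.length ≤ (D + 1) * p.length + D := by
  induction p with
  | nil =>
    intro X hX hu a ha
    simpa using exists_walk_of_induce_dist_le _ _ D (hpart X hX).1 (hpart X hX).2 ha hu
  | @cons u w v huw p ih =>
    intro X hX hu a ha
    obtain ⟨Y, hY, hw⟩ := P.exists_mem (Finset.mem_univ w)
    rw [SimpleGraph.Walk.length_cons, mul_add, mul_one]
    by_cases hXY : X = Y
    · subst hXY
      obtain ⟨q, hq⟩ := ih X hX hw a ha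
      exact ⟨q, by omega⟩
    · obtain ⟨e, he, x, hx, y, hy, rfl⟩ := hcross X hX Y hY hXY ⟨u, hu, w, hw, huw⟩
      -- Distinct parts are disjoint, so the crossing edge is not a loop.
      have hne : x ≠ y := by
        rintro rfl
        exact hXY (P.eq_of_mem_parts hX hY hx hy)
      have hadj : (SimpleGraph.fromEdgeSet E').Adj x y :=
        (SimpleGraph.fromEdgeSet_adj E').2 ⟨he, hne⟩
      obtain ⟨r, hr⟩ :=
        exists_walk_of_induce_dist_le _ _ D (hpart X hX).1 (hpart X hX).2 ha hx
      obtain ⟨q, hq⟩ := ih Y hY hw y hy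
      refine ⟨r.append (.cons hadj q), ?_⟩
      rw [SimpleGraph.Walk.length_append, SimpleGraph.Walk.length_cons]
      omega

/-- If `P` is a partition of the vertices of a connected graph `G` into nonempty parts,
and `E'` is a set of edges of `G` inducing on each part a connected subgraph of diameter
at most `D`, and containing at least one edge between every pair of parts joined by an
edge of `G`, then for all `u, v`: `dist_{G'}(u,v) ≤ (D+1)·dist_G(u,v) + D`. -/
theorem spanning_subgraph_stretch {V : Type*} [Fintype V] [DecidableEq V]
    (G : SimpleGraph V) (hG : G.Connected)
    (P : Finpartition (Finset.univ : Finset V))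
    (D : ℕ)
    (E' : Set (Sym2 V)) (hsub : E' ⊆ G.edgeSet)
    (hpart : ∀ X ∈ P.parts, ((SimpleGraph.fromEdgeSet E').induce (X : Set V)).Connected ∧
      ∀ a b : (X : Set V), ((SimpleGraph.fromEdgeSet E').induce (X : Set V)).dist a b ≤ D)
    (hcross : ∀ X ∈ P.parts, ∀ Y ∈ P.parts, X ≠ Y →
      (∃ x ∈ X, ∃ y ∈ Y, G.Adj x y) →
      ∃ e ∈ E', ∃ x ∈ X, ∃ y ∈ Y, e = s(x, y)) :
    ∀ u v : V, (SimpleGraph.fromEdgeSet E').dist u v ≤ (D + 1) * G.dist u v + D := by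
  intro u v
  obtain ⟨p, hp⟩ := hG.exists_walk_length_eq_dist u v
  obtain ⟨X, hX, hu⟩ := P.exists_mem (Finset.mem_univ u)
  obtain ⟨q, hq⟩ := exists_walk_of_walk G P D E' hpart hcross p X hX hu u hu
  rw [← hp]
  exact (SimpleGraph.dist_le q).trans hq
end

section
/- For all real numbers C > 0 and p > 0, there exist integers d ≥ 2 and k ≥ 2, a finite simple connected graph G with maximum degree at most d and at least k vertices, and a vertex v of G, such that |Y_k(v)| > C·(k·d)^p. In other words, there is no polynomial (in k and d) upper bound on |Y_k(v)| over all bounded-degree graphs. -/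
/-!
Take a tree of depth `2 ^ m`, rooted at `v`, in which a vertex has `b` children if its depth is
`2 ^ i` for some `i < m`, and exactly one child at every other depth below the maximum.  It has
maximum degree at most `2 * b` and `b ^ m` leaves, all at distance at most `2 ^ m` from the root.

Fix a leaf `u`.  A path of length less than `2 ^ m` starting at `u` climbs to some depth `j` and
can then only descend to a depth less than `2 * j` (`exists_turning_depth`).  There is at most one
power of two in `[j, 2 * j - 1)`, so the path goes through at most one choice of a child on its way
down.  Hence the endpoint is determined by its depth and the last choice made on the way from the
root to it, and the ball of radius `2 ^ m - 1` about `u` has at most `(2 ^ m + 1) * b` vertices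
(`ncard_near_le`).  With `k = (2 ^ m + 1) * b + 1`, the set `B_k(u)` therefore contains the root,
for every leaf `u`, so `|Y_k(v)| ≥ b ^ m`.

For `b = 2 ^ m` this gives `|Y_k(v)| ≥ 2 ^ (m ^ 2)`, while `k * d ≤ 2 ^ (4 * m)`; hence `|Y_k(v)|`
outgrows every fixed power of `k * d`.
-/

open Classical

noncomputable section

/-! ### The tree -/

/-- Vertices of the tree: a depth in `{0, …, 2 ^ m}` and a label recording the choices of children
made on the way from the root.  The `i`-th choice is made when leaving depth `2 ^ i`; choices not
made yet are normalised to `0`. -/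
def TreeVert (m b : ℕ) [NeZero b] : Type :=
  {w : Fin (2 ^ m + 1) × (Fin m → Fin b) // ∀ i : Fin m, w.1.val ≤ 2 ^ i.val → w.2 i = 0}

namespace TreeVert

variable {m b : ℕ} [NeZero b]

instance : Finite (TreeVert m b) := by unfold TreeVert; infer_instance

/-- The distance from the root. -/
def depth (w : TreeVert m b) : ℕ := w.1.1.val

/-- The choices of children made on the way from the root. -/
def label (w : TreeVert m b) (i : Fin m) : Fin b := w.1.2 i

lemma depth_le (w : TreeVert m b) : w.depth ≤ 2 ^ m := Nat.lt_succ_iff.mp w.1.1.isLt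

lemma label_eq_zero (w : TreeVert m b) (i : Fin m) (h : w.depth ≤ 2 ^ i.val) : w.label i = 0 :=
  w.2 i h

lemma ext' {w w' : TreeVert m b} (h : w.depth = w'.depth) (hl : ∀ i, w.label i = w'.label i) :
    w = w' :=
  Subtype.ext (Prod.ext (Fin.ext h) (funext hl))

/-- `c` is a child of `a`: one level deeper, with the choices already made at `a` unchanged. -/
def IsChild (a c : TreeVert m b) : Prop :=
  c.depth = a.depth + 1 ∧ ∀ i : Fin m, 2 ^ i.val < a.depth → c.label i = a.label i

/-- The tree, as an undirected graph. -/
def tree (m b : ℕ) [NeZero b] : SimpleGraph (TreeVert m b) where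
  Adj a c := IsChild a c ∨ IsChild c a
  symm := ⟨fun _ _ h => h.symm⟩
  loopless := ⟨fun a h => by rcases h with h | h <;> exact absurd h.1 (by omega)⟩

/-- The root. -/
def root (m b : ℕ) [NeZero b] : TreeVert m b := ⟨(0, fun _ => 0), fun _ _ => rfl⟩

/-- The leaf reached by the choices `x`. -/
def leaf (x : Fin m → Fin b) : TreeVert m b :=
  ⟨(Fin.last _, x), fun i h => absurd h (by
    simpa using Nat.pow_lt_pow_right (by norm_num : 1 < 2) i.isLt)⟩

lemma depth_leaf (x : Fin m → Fin b) : (leaf x).depth = 2 ^ m := rfl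

lemma leaf_injective : Function.Injective (leaf : (Fin m → Fin b) → TreeVert m b) :=
  fun _ _ h => congrArg (fun w : TreeVert m b => w.1.2) h

lemma exists_parent (w : TreeVert m b) (s : ℕ) (hs : w.depth = s + 1) :
    ∃ a : TreeVert m b, a.depth = s ∧ IsChild a w := by
  have hL := w.depth_le
  refine ⟨⟨(⟨s, by omega⟩, fun i => if s ≤ 2 ^ i.val then 0 else w.label i), ?_⟩, rfl, hs, ?_⟩
  · intro i hi
    exact if_pos hi
  · intro i hi
    exact (if_neg (not_le.mpr hi)).symm

lemma exists_walk_root (s : ℕ) :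
    ∀ w : TreeVert m b, w.depth = s → ∃ q : (tree m b).Walk w (root m b), q.length = s := by
  induction s with
  | zero =>
    intro w hw
    have h : w = root m b := ext' hw fun i => w.label_eq_zero i (hw ▸ Nat.zero_le _)
    subst h
    exact ⟨.nil, rfl⟩
  | succ s ih =>
    intro w hw
    obtain ⟨a, ha, hc⟩ := exists_parent w s hw
    obtain ⟨q, hq⟩ := ih a ha
    have hadj : (tree m b).Adj w a := Or.inr hc
    exact ⟨.cons hadj q, by rw [SimpleGraph.Walk.length_cons, hq]⟩

lemma tree_connected : (tree m b).Connected where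
  preconnected u w := by
    obtain ⟨q, -⟩ := exists_walk_root _ u rfl
    obtain ⟨q', -⟩ := exists_walk_root _ w rfl
    exact q.reachable.trans q'.reachable.symm
  nonempty := ⟨root m b⟩

lemma dist_root_le (w : TreeVert m b) : (tree m b).dist (root m b) w ≤ 2 ^ m := by
  obtain ⟨q, hq⟩ := exists_walk_root _ w rfl
  rw [SimpleGraph.dist_comm]
  exact (SimpleGraph.dist_le q).trans (hq.le.trans w.depth_le)

/-- A neighbour of `u` is determined by whether it is above or below `u` and, if it is below, by
the choice made at the depth of `u`. -/
lemma ncard_neighborSet_le (u : TreeVert m b) : ((tree m b).neighborSet u).ncard ≤ 2 * b := by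
  let f : TreeVert m b → Bool × Fin b := fun w =>
    (decide (w.depth < u.depth),
      if h : ∃ i : Fin m, 2 ^ i.val = u.depth then w.label h.choose else 0)
  have hinj : Set.InjOn f ((tree m b).neighborSet u) := by
    intro w hw w' hw' hf
    have h1 : w.depth < u.depth ↔ w'.depth < u.depth := by
      simpa [f] using congrArg Prod.fst hf
    have h2 := congrArg Prod.snd hf
    simp only [f] at h2
    rcases hw with hw | hw <;> rcases hw' with hw' | hw'
    · have hd := hw.1
      have hd' := hw'.1
      refine ext' (by omega) fun i => ?_
      rcases lt_trichotomy (2 ^ i.val) u.depth with hi | hi | hi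
      · rw [hw.2 i hi, hw'.2 i hi]
      · have hex : ∃ i : Fin m, 2 ^ i.val = u.depth := ⟨i, hi⟩
        have hch : hex.choose = i :=
          Fin.ext (Nat.pow_right_injective le_rfl (hex.choose_spec.trans hi.symm))
        rwa [dif_pos hex, dif_pos hex, hch] at h2
      · rw [label_eq_zero _ i (by omega), label_eq_zero _ i (by omega)]
    · have hd := hw.1
      have hd' := hw'.1
      omega
    · have hd := hw.1
      have hd' := hw'.1
      omega
    · have hd := hw.1
      have hd' := hw'.1
      refine ext' (by omega) fun i => ?_
      rcases lt_or_ge (2 ^ i.val) w.depth with hi | hi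
      · rw [← hw.2 i hi, hw'.2 i (by omega)]
      · rw [label_eq_zero _ i hi, label_eq_zero _ i (by omega)]
  calc ((tree m b).neighborSet u).ncard
      ≤ (Set.univ : Set (Bool × Fin b)).ncard :=
        Set.ncard_le_ncard_of_injOn f (fun _ _ => Set.mem_univ _) hinj
    _ = 2 * b := by simp [Set.ncard_univ]

/-! ### Small balls around leaves -/

/-- A walk from `w` to `u` reaches a smallest depth `j`: the choices of `w` and `u` made before
depth `j` agree, and the walk has at least `u.depth - j + (w.depth - j)` steps. -/
lemma exists_turning_depth {w u : TreeVert m b} (q : (tree m b).Walk w u) :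
    ∃ j, j ≤ w.depth ∧ u.depth + w.depth ≤ q.length + 2 * j ∧
      ∀ i : Fin m, 2 ^ i.val < j → w.label i = u.label i := by
  induction q with
  | nil => exact ⟨_, le_rfl, by simp; omega, fun _ _ => rfl⟩
  | @cons w w' u h q ih =>
    obtain ⟨j, hj, hlen, hlab⟩ := ih
    rw [SimpleGraph.Walk.length_cons]
    rcases h with h | h
    · have hd := h.1
      refine ⟨min j w.depth, min_le_right _ _, by omega, fun i hi => ?_⟩
      rw [← h.2 i (by omega), hlab i (by omega)]
    · have hd := h.1
      refine ⟨j, by omega, by omega, fun i hi => ?_⟩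
      rw [h.2 i (by omega), hlab i hi]

/-- A vertex `w` at distance less than `2 ^ m` from a leaf is determined by its depth and its last
choice, made at the unique power of two in `[w.depth / 2, w.depth)`. -/
lemma ncard_near_le (x : Fin m → Fin b) :
    {w | (tree m b).dist w (leaf x) < 2 ^ m}.ncard ≤ (2 ^ m + 1) * b := by
  have key : ∀ w : TreeVert m b, (tree m b).dist w (leaf x) < 2 ^ m →
      ∀ i : Fin m, 2 * 2 ^ i.val < w.depth → w.label i = x i := by
    intro w hw i hi
    obtain ⟨q, hq⟩ := tree_connected.exists_walk_length_eq_dist w (leaf x)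
    obtain ⟨j, hj, hlen, hlab⟩ := exists_turning_depth q
    rw [depth_leaf] at hlen
    exact hlab i (by omega)
  let f : TreeVert m b → Fin (2 ^ m + 1) × Fin b := fun w =>
    (w.1.1, if h : ∃ i : Fin m, 2 ^ i.val < w.depth ∧ w.depth ≤ 2 * 2 ^ i.val
      then w.label h.choose else 0)
  have huniq : ∀ (s : ℕ) (i j : Fin m), 2 ^ i.val < s → s ≤ 2 * 2 ^ i.val →
      2 ^ j.val < s → s ≤ 2 * 2 ^ j.val → i = j := by
    intro s i j hi hi' hj hj'
    have h1 : i.val < j.val + 1 := by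
      apply (Nat.pow_lt_pow_iff_right (a := 2) (by norm_num)).mp
      rw [pow_succ]; omega
    have h2 : j.val < i.val + 1 := by
      apply (Nat.pow_lt_pow_iff_right (a := 2) (by norm_num)).mp
      rw [pow_succ]; omega
    exact Fin.ext (by omega)
  have hinj : Set.InjOn f {w | (tree m b).dist w (leaf x) < 2 ^ m} := by
    intro w hw w' hw' hf
    have h1 : w.depth = w'.depth := congrArg (fun z => z.1.val) hf
    have h2 := congrArg Prod.snd hf
    simp only [f, ← h1] at h2
    refine ext' h1 fun i => ?_
    by_cases hi : 2 ^ i.val < w.depth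
    · by_cases hi' : w.depth ≤ 2 * 2 ^ i.val
      · have hex : ∃ i : Fin m, 2 ^ i.val < w.depth ∧ w.depth ≤ 2 * 2 ^ i.val := ⟨i, hi, hi'⟩
        have hch : hex.choose = i := huniq _ _ _ hex.choose_spec.1 hex.choose_spec.2 hi hi'
        rwa [dif_pos hex, dif_pos hex, hch] at h2
      · rw [key w hw i (by omega), key w' hw' i (by omega)]
    · rw [label_eq_zero _ i (by omega), label_eq_zero _ i (by omega)]
  calc {w | (tree m b).dist w (leaf x) < 2 ^ m}.ncard
      ≤ (Set.univ : Set (Fin (2 ^ m + 1) × Fin b)).ncard :=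
        Set.ncard_le_ncard_of_injOn f (fun _ _ => Set.mem_univ _) hinj
    _ = (2 ^ m + 1) * b := by simp [Set.ncard_univ]

end TreeVert

/-! ### From small balls to `Yk` -/

/-- If fewer than `k` vertices are closer to `u` than some `D ≥ dist(v, u)`, then `v ∈ B_k(u)`.
The hypothesis `k ≤ |V|` makes the infimum defining `ℓ_k(u)` one of a nonempty set. -/
lemma mem_Yk_of_ncard_lt {V : Type*} [Finite V] {G : SimpleGraph V} {k D : ℕ} {u v : V}
    (hk : k ≤ Nat.card V) (hD : G.dist v u ≤ D) (hlt : {w | G.dist w u < D}.ncard < k) :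
    u ∈ Yk G k v := by
  have hne : {ℓ : ℕ | k ≤ (Gamma G u ℓ).ncard}.Nonempty := by
    obtain ⟨N, hN⟩ := (Set.finite_range fun w => G.dist w u).bddAbove
    refine ⟨N, ?_⟩
    have huniv : Gamma G u N = Set.univ :=
      Set.eq_univ_of_forall fun w => hN ⟨w, rfl⟩
    change k ≤ (Gamma G u N).ncard
    rwa [huniv, Set.ncard_univ]
  have hmem : k ≤ (Gamma G u (ellk G k u)).ncard := Nat.sInf_mem hne
  by_contra hcon
  have hcon' : ellk G k u < G.dist v u := not_le.mp hcon
  have hsub : Gamma G u (ellk G k u) ⊆ {w | G.dist w u < D} := fun w hw =>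
    lt_of_le_of_lt hw (hcon'.trans_le hD)
  have := Set.ncard_le_ncard hsub (Set.toFinite _)
  omega

lemma dist_iso_le {V W : Type*} {G : SimpleGraph V} {H : SimpleGraph W} (e : G ≃g H)
    (hG : G.Connected) (u v : V) : H.dist (e u) (e v) ≤ G.dist u v := by
  obtain ⟨q, hq⟩ := hG.exists_walk_length_eq_dist u v
  rw [← hq, ← SimpleGraph.Walk.length_map e.toHom q]
  exact SimpleGraph.dist_le _

lemma dist_iso {V W : Type*} {G : SimpleGraph V} {H : SimpleGraph W} (e : G ≃g H)
    (hG : G.Connected) (u v : V) : H.dist (e u) (e v) = G.dist u v := by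
  refine le_antisymm (dist_iso_le e hG u v) ?_
  simpa using dist_iso_le e.symm (e.connected_iff.mp hG) (e u) (e v)

/-- The tree, with its vertices renamed to `Fin n`. -/
lemma exists_graph_Yk_large (m b : ℕ) [NeZero b] (hk : (2 ^ m + 1) * b + 1 ≤ b ^ m) :
    ∃ (n : ℕ) (G : SimpleGraph (Fin n)) (v : Fin n), G.Connected ∧
      (∀ u : Fin n, (G.neighborSet u).ncard ≤ 2 * b) ∧ (2 ^ m + 1) * b + 1 ≤ n ∧
      b ^ m ≤ (Yk G ((2 ^ m + 1) * b + 1) v).ncard := by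
  let E : TreeVert m b ≃ Fin (Nat.card (TreeVert m b)) := Finite.equivFin _
  let e : TreeVert.tree m b ≃g (TreeVert.tree m b).map E.toEmbedding := SimpleGraph.Iso.map E _
  have hleaves : b ^ m ≤ Nat.card (TreeVert m b) := by
    simpa using Nat.card_le_card_of_injective _ (TreeVert.leaf_injective (m := m) (b := b))
  have hconn := TreeVert.tree_connected (m := m) (b := b)
  refine ⟨_, (TreeVert.tree m b).map E.toEmbedding, e (TreeVert.root m b), e.connected_iff.mp hconn, fun u => ?_,
    hk.trans hleaves, ?_⟩
  · obtain ⟨u, rfl⟩ := e.surjective u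
    refine le_trans ?_ (TreeVert.ncard_neighborSet_le u)
    refine Set.ncard_le_ncard_of_injOn e.symm (fun w hw => ?_) e.symm.injective.injOn
      (Set.toFinite _)
    have := e.symm.map_adj_iff.mpr hw
    rwa [e.symm_apply_apply] at this
  · have hsub : Set.range (fun x : Fin m → Fin b => e (TreeVert.leaf x)) ⊆
        Yk ((TreeVert.tree m b).map E.toEmbedding) ((2 ^ m + 1) * b + 1) (e (TreeVert.root m b)) := by
      rintro _ ⟨x, rfl⟩
      refine mem_Yk_of_ncard_lt (D := 2 ^ m) ?_ ?_ ?_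
      · simpa using hk.trans hleaves
      · rw [dist_iso e hconn]
        exact TreeVert.dist_root_le _
      · refine Nat.lt_succ_of_le (le_trans ?_ (TreeVert.ncard_near_le x))
        refine Set.ncard_le_ncard_of_injOn e.symm (fun w hw => ?_) e.symm.injective.injOn
          (Set.toFinite _)
        obtain ⟨w, rfl⟩ := e.surjective w
        change ((TreeVert.tree m b).map E.toEmbedding).dist (e w) (e (TreeVert.leaf x)) < 2 ^ m at hw
        rw [dist_iso e hconn] at hw
        rwa [e.symm_apply_apply]
    have hcard : (Set.range (fun x : Fin m → Fin b => e (TreeVert.leaf x))).ncard = b ^ m := by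
      have hinj : Function.Injective (fun x : Fin m → Fin b => e (TreeVert.leaf x)) :=
        e.injective.comp TreeVert.leaf_injective
      rw [← Set.image_univ, Set.ncard_image_of_injective _ hinj, Set.ncard_univ]
      simp
    rw [← hcard]
    exact Set.ncard_le_ncard hsub (Set.toFinite _)

/-! ### Choice of parameters -/

/-- With `b = 2 ^ m`, the number `b ^ m` of leaves exceeds `C * (k * d) ^ p` for large `m`. -/
lemma exists_exponent (C p : ℝ) (hC : 0 < C) (hp : 0 < p) : ∃ m : ℕ, 3 ≤ m ∧
    C * ((((2 ^ m + 1) * 2 ^ m + 1) * (2 * 2 ^ m) : ℕ) : ℝ) ^ p < (((2 ^ m) ^ m : ℕ) : ℝ) := by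
  obtain ⟨m, hm⟩ := exists_nat_ge (4 * p + C + 3)
  have hm3 : 3 ≤ m := by
    have : (3 : ℝ) ≤ m := by linarith
    exact_mod_cast this
  refine ⟨m, hm3, ?_⟩
  have h8 : 2 ^ 3 ≤ 2 ^ m := Nat.pow_le_pow_right (by norm_num) hm3
  have hkd : ((2 ^ m + 1) * 2 ^ m + 1) * (2 * 2 ^ m) ≤ 2 ^ (4 * m) := by
    rw [mul_comm 4 m, pow_mul]
    generalize 2 ^ m = b at h8
    have h1 : (b + 1) * b + 1 ≤ 2 * b ^ 2 := by nlinarith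
    calc ((b + 1) * b + 1) * (2 * b) ≤ (2 * b ^ 2) * (2 * b) := Nat.mul_le_mul_right _ h1
      _ = 4 * b ^ 3 := by ring
      _ ≤ b * b ^ 3 := Nat.mul_le_mul_right _ (by omega)
      _ = b ^ 4 := by ring
  have hC2 : C < (2 : ℝ) ^ (m : ℝ) := by
    rw [Real.rpow_natCast]
    have : (m : ℝ) < 2 ^ m := by exact_mod_cast Nat.lt_two_pow_self
    linarith
  calc C * ((((2 ^ m + 1) * 2 ^ m + 1) * (2 * 2 ^ m) : ℕ) : ℝ) ^ p
      ≤ C * (((2 ^ (4 * m) : ℕ) : ℝ)) ^ p := by gcongr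
    _ = C * (2 : ℝ) ^ (4 * m * p) := by
        push_cast
        rw [← Real.rpow_natCast, ← Real.rpow_mul (by norm_num)]
        push_cast
        rfl
    _ < (2 : ℝ) ^ (m : ℝ) * (2 : ℝ) ^ (4 * m * p) := by gcongr
    _ = (2 : ℝ) ^ (m + 4 * m * p) := (Real.rpow_add (by norm_num) _ _).symm
    _ ≤ (2 : ℝ) ^ ((m * m : ℕ) : ℝ) := by
        apply Real.rpow_le_rpow_of_exponent_le (by norm_num)
        push_cast
        nlinarith
    _ = (((2 ^ m) ^ m : ℕ) : ℝ) := by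
        rw [Real.rpow_natCast, pow_mul]
        push_cast
        rfl

/-- There is no polynomial (in `k` and `d`) upper bound on `|Y_k(v)|` over bounded-degree
graphs: for all `C, p > 0` there are `d, k ≥ 2`, a connected graph `G` of maximum degree
at most `d` on `n ≥ k` vertices, and a vertex `v` with `|Y_k(v)| > C·(k·d)^p`. -/
theorem Yk_no_polynomial_bound (C p : ℝ) (hC : 0 < C) (hp : 0 < p) :
    ∃ (d k n : ℕ) (G : SimpleGraph (Fin n)) (v : Fin n),
      2 ≤ d ∧ 2 ≤ k ∧ G.Connected ∧
      (∀ u : Fin n, (G.neighborSet u).ncard ≤ d) ∧ k ≤ n ∧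
      C * ((k * d : ℕ) : ℝ) ^ p < ((Yk G k v).ncard : ℝ) := by
  obtain ⟨m, hm, hlt⟩ := exists_exponent C p hC hp
  have h8 : 2 ^ 3 ≤ 2 ^ m := Nat.pow_le_pow_right (by norm_num) hm
  have hk : (2 ^ m + 1) * 2 ^ m + 1 ≤ (2 ^ m) ^ m := by
    calc (2 ^ m + 1) * 2 ^ m + 1 ≤ (2 ^ m) ^ 3 := by
          generalize 2 ^ m = b at h8
          nlinarith [Nat.mul_le_mul_right (b ^ 2) h8]
      _ ≤ (2 ^ m) ^ m := Nat.pow_le_pow_right (by omega) hm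
  obtain ⟨n, G, v, hconn, hdeg, hn, hY⟩ := exists_graph_Yk_large m (2 ^ m) hk
  refine ⟨2 * 2 ^ m, (2 ^ m + 1) * 2 ^ m + 1, n, G, v, by omega, by nlinarith, hconn, hdeg, hn, ?_⟩
  exact hlt.trans_le (by exact_mod_cast hY)

end
end
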